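/- Let r₀ > 0, ν̄ > 0, and let f : ℝ × B[0,r₀] × [0,ν̄] → ℝⁿ be continuous, with f_ν := f(·,·,ν) RAP in t uniformly with respect to (x,ν), continuously differentiable in x with ∂f_ν/∂x continuous in x uniformly in t ∈ ℝ. Suppose the averaged function f₀(x) := lim_{T→∞} (1/(2T)) ∫_{−T}^{T} f(t,x,0) dt exists, with the convergence of (1/(2T)) ∫_{−T}^{T} f(t+s,x,0) dt to f₀(x) uniform in s ∈ ℝ and x ∈ B[0,r₀]. Then for every r < r₀ there exist ν₀ > 0 and a continuous function U : ℝ × B[0,r] × (0,ν₀] → ℝⁿ such that: (1) for each ν ∈ (0,ν₀], U(·,·,ν) is RAP in t uniformly in x and possesses a mean value lim_{T→∞} (1/(2T)) ∫_{−T}^{T} U(t,x,ν) dt; (2) ∂U/∂t and ∂U/∂x exist and are continuous, and are RAP in t and possess mean values for each ν; (3) setting G(t,x,ν) := ∂U/∂t(t,x,ν) − f(t,x,0) + f₀(x), each of the functions ν·U, ν·∂U/∂x, G, and ∂G/∂x tends to 0 as ν → 0⁺, uniformly on ℝ × B[0,r]; (4) for each ν ∈ (0,ν₀] the change of variables x =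 y + ν·U(t,y,ν) is invertible on ℝ × B[0,r], and it transforms the equation x' = ν·f_ν(t,x) into y' = ν·f₀(y) + ν·F_ν(t,y), where F_ν is RAP in t uniformly and F_ν → 0 uniformly on ℝ × B[0,r] as ν → 0⁺. -/

import Mathlib

open MeasureTheory Filter Metric

def RelativelyDense (S : Set ℝ) : Prop :=
  ∃ l > 0, ∀ a : ℝ, ∃ τ ∈ S, τ ∈ Set.Icc a (a + l)

def RAPUniform {E F : Type*} [NormedAddCommGroup E] [NormedAddCommGroup F]
    (f : ℝ → E → F) (S : Set E) : Prop :=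
  (∃ C, ∀ t, ∀ x ∈ S, ‖f t x‖ ≤ C) ∧
  UniformContinuousOn (fun p : ℝ × E => f p.1 p.2) (Set.univ ×ˢ S) ∧
  ∀ ε > 0, RelativelyDense
    {τ | Filter.limsup (fun t => ⨆ x ∈ S, ‖f (t + τ) x - f t x‖) (Filter.cocompact ℝ) < ε}

/-!
With `h t x = f t x 0 - f₀ x`, the corrector should solve `∂U/∂t = h`, but bounded primitives of
`h` need not exist. Instead `U` is a primitive of `h` from which its mean over the sliding interval
`[t, t + T]` is subtracted, with `T = 1 / √ν`. Then `∂U/∂t` is `h` minus its mean over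
`[t, t + T]`, which is small because `T → ∞`, while `ν • U` is of order `ν T = √ν`. The mean of `h`
is differentiable with the mean of `∂h/∂x` as derivative by Landau's inequality: uniformly small
functions with equicontinuous derivatives have uniformly small derivatives. The same inequality
shows that `∂f/∂x` is remotely almost periodic.

Sums of remotely almost periodic functions need common translation numbers. Those of `f` form the
basis of a filter, and every function constructed here is recurrent along that one filter.
-/

section Recurrence

variable {X E F G : Type*} [NormedAddCommGroup E] [NormedAddCommGroup F] [NormedAddCommGroup G]

/-- The size of `f (t + τ) · - f t ·` on `S` as `|t| → ∞`, so that `RAPUniform` asks for a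
relatively dense set of shifts `τ` with small remote oscillation. -/
noncomputable def remoteOscillation (f : ℝ → X → F) (S : Set X) (τ : ℝ) : ℝ :=
  limsup (fun t => ⨆ x ∈ S, ‖f (t + τ) x - f t x‖) (cocompact ℝ)

/-- Remote almost periodicity with a prescribed filter `𝓣` of translation numbers: shifting time
by `τ` changes `f` arbitrarily little near infinity as `τ` runs along `𝓣`. Unlike `RAPUniform`,
this is preserved by combining functions that share `𝓣`. -/
structure RemotelyRecurrentOn (𝓣 : Filter ℝ) (f : ℝ → E → F) (S : Set E) : Prop where
  bounded : ∃ C, ∀ t, ∀ x ∈ S, ‖f t x‖ ≤ C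
  uniformContinuousOn : UniformContinuousOn (fun p : ℝ × E => f p.1 p.2) (Set.univ ×ˢ S)
  recurrent : ∀ ε > 0, ∀ᶠ τ in 𝓣, ∀ᶠ t in cocompact ℝ, ∀ x ∈ S, dist (f (t + τ) x) (f t x) ≤ ε

theorem uniformContinuousOn_prodMk {α β γ : Type*} [UniformSpace α] [UniformSpace β]
    [UniformSpace γ] {f : α → β} {g : α → γ} {s : Set α} (hf : UniformContinuousOn f s)
    (hg : UniformContinuousOn g s) : UniformContinuousOn (fun a => (f a, g a)) s := by
  rw [uniformContinuousOn_iff_restrict] at *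
  exact hf.prodMk hg

theorem RelativelyDense.mono {A B : Set ℝ} (hA : RelativelyDense A) (hAB : A ⊆ B) :
    RelativelyDense B := by
  obtain ⟨l, hl, hA⟩ := hA
  exact ⟨l, hl, fun a => (hA a).imp fun τ hτ => ⟨hAB hτ.1, hτ.2⟩⟩

theorem eventually_dist_le_of_remoteOscillation_lt {f : ℝ → X → F} {S : Set X} {τ ε : ℝ}
    (hbdd : ∃ C, ∀ t, ∀ x ∈ S, ‖f t x‖ ≤ C) (hτ : remoteOscillation f S τ < ε) :
    ∀ᶠ t in cocompact ℝ, ∀ x ∈ S, dist (f (t + τ) x) (f t x) ≤ ε := by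
  obtain ⟨C, hC⟩ := hbdd
  have pointwise (t : ℝ) (x : X) : ⨆ _ : x ∈ S, ‖f (t + τ) x - f t x‖ ≤ |C + C| :=
    Real.iSup_le (fun hx => (norm_sub_le_of_le (hC _ x hx) (hC t x hx)).trans (le_abs_self _))
      (abs_nonneg _)
  have isBounded : IsBoundedUnder (· ≤ ·) (cocompact ℝ)
      (fun t => ⨆ x ∈ S, ‖f (t + τ) x - f t x‖) :=
    isBoundedUnder_of ⟨|C + C|, fun t => Real.iSup_le (pointwise t) (abs_nonneg _)⟩
  filter_upwards [eventually_lt_of_limsup_lt hτ isBounded] with t ht x hx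
  calc dist (f (t + τ) x) (f t x) = ⨆ _ : x ∈ S, ‖f (t + τ) x - f t x‖ := by
        rw [ciSup_pos hx, dist_eq_norm]
    _ ≤ ⨆ x ∈ S, ‖f (t + τ) x - f t x‖ :=
        le_ciSup (f := fun x => ⨆ _ : x ∈ S, ‖f (t + τ) x - f t x‖)
          ⟨|C + C|, Set.forall_mem_range.2 (pointwise t)⟩ x
    _ ≤ ε := ht.le

theorem remoteOscillation_le {f : ℝ → X → F} {S : Set X} {τ ε : ℝ} (hε : 0 ≤ ε)
    (h : ∀ᶠ t in cocompact ℝ, ∀ x ∈ S, dist (f (t + τ) x) (f t x) ≤ ε) :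
    remoteOscillation f S τ ≤ ε := by
  refine limsup_le_of_le (IsBoundedUnder.isCoboundedUnder_le ⟨0, ?_⟩) ?_
  · exact eventually_map.2 (.of_forall fun t =>
      Real.iSup_nonneg fun x => Real.iSup_nonneg fun _ => norm_nonneg _)
  · filter_upwards [h] with t ht
    exact Real.iSup_le (fun x => Real.iSup_le (fun hx => dist_eq_norm (f (t + τ) x) _ ▸ ht x hx) hε)
      hε

theorem RemotelyRecurrentOn.rapUniform {𝓣 : Filter ℝ} {f : ℝ → E → F} {S : Set E}
    (hf : RemotelyRecurrentOn 𝓣 f S) (h𝓣 : ∀ A ∈ 𝓣, RelativelyDense A) : RAPUniform f S :=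
  ⟨hf.bounded, hf.uniformContinuousOn, fun ε hε =>
    (h𝓣 _ (hf.recurrent (ε / 2) (half_pos hε))).mono fun _ hτ =>
      (remoteOscillation_le (half_pos hε).le hτ).trans_lt (half_lt_self hε)⟩

theorem RAPUniform.exists_remotelyRecurrentOn {f : ℝ → E → F} {S : Set E} (hf : RAPUniform f S) :
    ∃ 𝓣 : Filter ℝ, (∀ A ∈ 𝓣, RelativelyDense A) ∧ RemotelyRecurrentOn 𝓣 f S := by
  have basis : (⨅ ε ∈ Set.Ioi (0 : ℝ), 𝓟 (remoteOscillation f S ⁻¹' Set.Iio ε)).HasBasis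
      (· ∈ Set.Ioi 0) (fun ε => remoteOscillation f S ⁻¹' Set.Iio ε) :=
    hasBasis_biInf_principal' (fun ε hε δ hδ =>
      ⟨min ε δ, Set.mem_Ioi.2 (lt_min hε hδ),
        Set.preimage_mono (Set.Iio_subset_Iio (min_le_left _ _)),
        Set.preimage_mono (Set.Iio_subset_Iio (min_le_right _ _))⟩) ⟨1, Set.mem_Ioi.2 one_pos⟩
  refine ⟨⨅ ε ∈ Set.Ioi (0 : ℝ), 𝓟 (remoteOscillation f S ⁻¹' Set.Iio ε), fun A hA => ?_,
    hf.1, hf.2.1, fun ε hε => ?_⟩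
  · obtain ⟨ε, hε, hA⟩ := basis.mem_iff.1 hA
    exact (hf.2.2 ε hε).mono hA
  · filter_upwards [basis.mem_of_mem hε] with τ hτ
    exact eventually_dist_le_of_remoteOscillation_lt hf.1 hτ

namespace RemotelyRecurrentOn

variable {𝓣 : Filter ℝ} {S S' : Set E}

theorem mono {f : ℝ → E → F} (hf : RemotelyRecurrentOn 𝓣 f S') (hS : S ⊆ S') :
    RemotelyRecurrentOn 𝓣 f S where
  bounded := hf.bounded.imp fun _ hC t x hx => hC t x (hS hx)
  uniformContinuousOn := hf.uniformContinuousOn.mono (Set.prod_mono subset_rfl hS)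
  recurrent ε hε := by
    filter_upwards [hf.recurrent ε hε] with τ hτ
    filter_upwards [hτ] with t ht x hx using ht x (hS hx)

theorem prodMk {f : ℝ → E → F} {g : ℝ → E → G} (hf : RemotelyRecurrentOn 𝓣 f S)
    (hg : RemotelyRecurrentOn 𝓣 g S) : RemotelyRecurrentOn 𝓣 (fun t x => (f t x, g t x)) S where
  bounded := by
    obtain ⟨C, hC⟩ := hf.bounded
    obtain ⟨D, hD⟩ := hg.bounded
    exact ⟨max C D, fun t x hx => max_le_max (hC t x hx) (hD t x hx)⟩
  uniformContinuousOn := uniformContinuousOn_prodMk hf.uniformContinuousOn hg.uniformContinuousOn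
  recurrent ε hε := by
    filter_upwards [hf.recurrent ε hε, hg.recurrent ε hε] with τ hfτ hgτ
    filter_upwards [hfτ, hgτ] with t hft hgt x hx using max_le (hft x hx) (hgt x hx)

theorem comp {f : ℝ → F → G} {g : ℝ → E → F} {P : Set F} (hf : RemotelyRecurrentOn 𝓣 f P)
    (hg : RemotelyRecurrentOn 𝓣 g S) (hgP : ∀ t, ∀ x ∈ S, g t x ∈ P) :
    RemotelyRecurrentOn 𝓣 (fun t x => f t (g t x)) S where
  bounded := hf.bounded.imp fun _ hC t x hx => hC t _ (hgP t x hx)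
  uniformContinuousOn :=
    hf.uniformContinuousOn.comp
      (uniformContinuousOn_prodMk uniformContinuous_fst.uniformContinuousOn hg.uniformContinuousOn)
      fun p hp => ⟨trivial, hgP p.1 p.2 hp.2⟩
  recurrent ε hε := by
    obtain ⟨δ, hδ, modulus⟩ :=
      Metric.uniformContinuousOn_iff_le.1 hf.uniformContinuousOn (ε / 2) (half_pos hε)
    filter_upwards [hf.recurrent (ε / 2) (half_pos hε), hg.recurrent δ hδ] with τ hfτ hgτ
    filter_upwards [hfτ, hgτ] with t hft hgt x hx
    have hspace : dist (f t (g (t + τ) x)) (f t (g t x)) ≤ ε / 2 :=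
      modulus (t, _) ⟨trivial, hgP _ x hx⟩ (t, _) ⟨trivial, hgP _ x hx⟩
        (by simpa [Prod.dist_eq, hδ.le] using hgt x hx)
    calc dist (f (t + τ) (g (t + τ) x)) (f t (g t x))
        ≤ dist (f (t + τ) (g (t + τ) x)) (f t (g (t + τ) x))
          + dist (f t (g (t + τ) x)) (f t (g t x)) := dist_triangle _ _ _
      _ ≤ ε := by linarith [hft _ (hgP (t + τ) x hx)]

theorem const {Φ : E → F} (hΦ : UniformContinuousOn Φ S) (hbdd : ∃ C, ∀ x ∈ S, ‖Φ x‖ ≤ C) :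
    RemotelyRecurrentOn 𝓣 (fun _ => Φ) S where
  bounded := hbdd.imp fun _ hC _ x hx => hC x hx
  uniformContinuousOn := hΦ.comp uniformContinuous_snd.uniformContinuousOn fun _ hp => hp.2
  recurrent ε hε := by simp [hε.le]

theorem clm_comp [NormedSpace ℝ F] [NormedSpace ℝ G] {f : ℝ → E → F}
    (hf : RemotelyRecurrentOn 𝓣 f S) (L : F →L[ℝ] G) :
    RemotelyRecurrentOn 𝓣 (fun t x => L (f t x)) S := by
  obtain ⟨C, hC⟩ := hf.bounded
  refine comp (P := closedBall 0 C) (const L.uniformContinuous.uniformContinuousOn ?_) hf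
    fun t x hx => mem_closedBall_zero_iff.2 (hC t x hx)
  exact ⟨‖L‖ * C, fun y hy => L.le_opNorm_of_le (mem_closedBall_zero_iff.1 hy)⟩

theorem const_smul [NormedSpace ℝ F] {f : ℝ → E → F} (hf : RemotelyRecurrentOn 𝓣 f S) (c : ℝ) :
    RemotelyRecurrentOn 𝓣 (fun t x => c • f t x) S :=
  hf.clm_comp (c • ContinuousLinearMap.id ℝ F)

theorem add [NormedSpace ℝ F] {f g : ℝ → E → F} (hf : RemotelyRecurrentOn 𝓣 f S)
    (hg : RemotelyRecurrentOn 𝓣 g S) : RemotelyRecurrentOn 𝓣 (fun t x => f t x + g t x) S :=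
  (hf.prodMk hg).clm_comp (ContinuousLinearMap.fst ℝ F F + ContinuousLinearMap.snd ℝ F F)

theorem sub [NormedSpace ℝ F] {f g : ℝ → E → F} (hf : RemotelyRecurrentOn 𝓣 f S)
    (hg : RemotelyRecurrentOn 𝓣 g S) : RemotelyRecurrentOn 𝓣 (fun t x => f t x - g t x) S :=
  (hf.prodMk hg).clm_comp (ContinuousLinearMap.fst ℝ F F - ContinuousLinearMap.snd ℝ F F)

theorem neg [NormedSpace ℝ F] {f : ℝ → E → F} (hf : RemotelyRecurrentOn 𝓣 f S) :
    RemotelyRecurrentOn 𝓣 (fun t x => -f t x) S :=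
  hf.clm_comp (-ContinuousLinearMap.id ℝ F)

theorem continuous_apply {f : ℝ → E → F} (hf : RemotelyRecurrentOn 𝓣 f S) {x : E} (hx : x ∈ S) :
    Continuous (f · x) :=
  continuousOn_univ.1 (hf.uniformContinuousOn.continuousOn.comp (f := fun t => (t, x))
    (by fun_prop) fun _ _ => ⟨trivial, hx⟩)

end RemotelyRecurrentOn

end Recurrence

section WeightedMean

variable {F : Type*} [NormedAddCommGroup F] [NormedSpace ℝ F]

/-- The mean of `k` over the time interval `[t, t + T]`, rescaled to `[0, 1]` and weighted by `w`.
The weight `1` gives the usual mean. -/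
noncomputable def weightedMean (w : ℝ → ℝ) (k : ℝ → F) (T t : ℝ) : F :=
  ∫ v in (0 : ℝ)..1, w v • k (t + T * v)

/-- The weights for which `weightedMean` does not increase the supremum norm. -/
structure IsUnitWeight (w : ℝ → ℝ) : Prop where
  continuous : Continuous w
  abs_le_one : ∀ v ∈ Set.Icc (0 : ℝ) 1, |w v| ≤ 1

theorem isUnitWeight_one : IsUnitWeight 1 :=
  ⟨continuous_one, fun _ _ => abs_one.le⟩

theorem isUnitWeight_one_sub : IsUnitWeight (fun v => 1 - v) :=
  ⟨by fun_prop, fun v hv => abs_le.2 ⟨by linarith [hv.2], by linarith [hv.1]⟩⟩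

variable {w w' : ℝ → ℝ} {k l : ℝ → F}

theorem IsUnitWeight.norm_smul_le (hw : IsUnitWeight w) {v C : ℝ} {a : F} (hv : v ∈ Set.Icc 0 1)
    (ha : ‖a‖ ≤ C) : ‖w v • a‖ ≤ C := by
  rw [norm_smul, Real.norm_eq_abs]
  exact (mul_le_of_le_one_left (norm_nonneg a) (hw.abs_le_one v hv)).trans ha

theorem norm_integral_zero_one_le {a : ℝ → F} {C : ℝ} (ha : ∀ v ∈ Set.Icc (0 : ℝ) 1, ‖a v‖ ≤ C) :
    ‖∫ v in (0 : ℝ)..1, a v‖ ≤ C := by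
  simpa using intervalIntegral.norm_integral_le_of_norm_le_const (a := (0 : ℝ)) (b := 1)
    fun v hv => ha v (Set.Ioc_subset_Icc_self (Set.uIoc_of_le (zero_le_one (α := ℝ)) ▸ hv))

theorem norm_weightedMean_le (hw : IsUnitWeight w) {C : ℝ} (hC : ∀ t, ‖k t‖ ≤ C) (T t : ℝ) :
    ‖weightedMean w k T t‖ ≤ C :=
  norm_integral_zero_one_le fun _ hv => hw.norm_smul_le hv (hC _)

theorem weightedMean_sub (hw : Continuous w) (hk : Continuous k) (hl : Continuous l)
    (T t T' t' : ℝ) : weightedMean w k T t - weightedMean w l T' t' =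
      ∫ v in (0 : ℝ)..1, w v • (k (t + T * v) - l (t' + T' * v)) := by
  simp only [weightedMean, smul_sub]
  exact (intervalIntegral.integral_sub (Continuous.intervalIntegrable (by fun_prop) _ _)
    (Continuous.intervalIntegrable (by fun_prop) _ _)).symm

theorem dist_weightedMean_le (hw : IsUnitWeight w) (hk : Continuous k) (hl : Continuous l)
    {T t T' t' ε : ℝ} (h : ∀ v ∈ Set.Icc (0 : ℝ) 1, dist (k (t + T * v)) (l (t' + T' * v)) ≤ ε) :
    dist (weightedMean w k T t) (weightedMean w l T' t') ≤ ε := by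
  rw [dist_eq_norm, weightedMean_sub hw.continuous hk hl]
  exact norm_integral_zero_one_le fun v hv =>
    hw.norm_smul_le hv ((dist_eq_norm _ _).symm.trans_le (h v hv))

theorem weightedMean_comm (hw : Continuous w) (hw' : Continuous w') (hk : Continuous k)
    (T T' t : ℝ) : weightedMean w (weightedMean w' k T') T t =
      weightedMean w' (weightedMean w k T) T' t := by
  simp only [weightedMean, ← intervalIntegral.integral_smul]
  rw [intervalIntegral_intervalIntegral_swap]
  · refine intervalIntegral.integral_congr fun u _ => intervalIntegral.integral_congr fun v _ => ?_
    simp only [smul_comm (w v), add_right_comm t]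
  · have hc : Continuous fun p : ℝ × ℝ => w p.1 • w' p.2 • k (t + T * p.1 + T' * p.2) := by
      fun_prop
    exact (hc.continuousOn.integrableOn_compact (isCompact_uIcc.prod isCompact_uIcc)).mono_set
      (Set.prod_mono Set.uIoc_subset_uIcc Set.uIoc_subset_uIcc)

theorem symmetricMean_eq_weightedMean (k : ℝ → F) {T : ℝ} (hT : T ≠ 0) (s : ℝ) :
    (1 / (2 * T)) • ∫ t in -T..T, k (t + s) = weightedMean 1 k (2 * T) (s - T) := by
  have h2T : 2 * T ≠ 0 := mul_ne_zero two_ne_zero hT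
  simp only [weightedMean, Pi.one_apply, one_smul, one_div]
  rw [intervalIntegral.integral_comp_add_mul k h2T, intervalIntegral.integral_comp_add_right]
  congr 2 <;> ring

variable [CompleteSpace F]

theorem weightedMean_one_eq_slope {K : ℝ → F} (hK : ∀ t, HasDerivAt K (k t) t)
    (hk : Continuous k) {T : ℝ} (hT : T ≠ 0) (t : ℝ) :
    weightedMean 1 k T t = T⁻¹ • (K (t + T) - K t) := by
  simp only [weightedMean, Pi.one_apply, one_smul]
  rw [intervalIntegral.integral_comp_add_mul k hT, mul_zero, add_zero, mul_one,
    intervalIntegral.integral_eq_sub_of_hasDerivAt (fun s _ => hK s) (hk.intervalIntegrable _ _)]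

theorem hasDerivAt_weightedMean_one {K : ℝ → F} (hK : ∀ t, HasDerivAt K (k t) t)
    (hk : Continuous k) {T : ℝ} (hT : T ≠ 0) (t : ℝ) :
    HasDerivAt (weightedMean 1 K T) (weightedMean 1 k T t) t := by
  have hK_cont : Continuous K := continuous_iff_continuousAt.2 fun t => (hK t).continuousAt
  have hKK (t : ℝ) : HasDerivAt (fun t => ∫ s in (0 : ℝ)..t, K s) (K t) t :=
    (hK_cont.integral_hasStrictDerivAt 0 t).hasDerivAt
  rw [weightedMean_one_eq_slope hK hk hT,
    funext (weightedMean_one_eq_slope hKK hK_cont hT)]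
  exact (((hKK (t + T)).comp_add_const t T).sub (hKK t)).const_smul T⁻¹

/-- The solution `u` of `u' = k - weightedMean 1 k T` obtained from any primitive `K` of `k` as
`K - weightedMean 1 K T`; this formula, free of primitives, results from integrating by parts. -/
noncomputable def corrector (k : ℝ → F) (T t : ℝ) : F :=
  -(T • weightedMean (fun v => 1 - v) k T t)

theorem corrector_eq_sub_weightedMean {K : ℝ → F} (hK : ∀ t, HasDerivAt K (k t) t)
    (hk : Continuous k) (T t : ℝ) : corrector k T t = K t - weightedMean 1 K T t := by
  have hK_line (v : ℝ) : HasDerivAt (fun v => K (t + T * v)) (T • k (t + T * v)) v := by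
    simpa [Function.comp_def] using
      (hK (t + T * v)).scomp v (((hasDerivAt_id v).const_mul T).const_add t)
  have by_parts := intervalIntegral.integral_smul_deriv_eq_deriv_smul (a := 0) (b := 1)
    (fun v _ => (hasDerivAt_id v).const_sub 1) (fun v _ => hK_line v)
    (continuous_const.intervalIntegrable _ _)
    (Continuous.intervalIntegrable (by fun_prop) _ _)
  simp only [id, sub_self, zero_smul, sub_zero, mul_zero, add_zero, one_smul, zero_sub, neg_smul,
    intervalIntegral.integral_neg, sub_neg_eq_add] at by_parts
  simp only [corrector, weightedMean, ← intervalIntegral.integral_smul, smul_comm T, by_parts,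
    Pi.one_apply, one_smul]
  abel

theorem hasDerivAt_corrector (hk : Continuous k) {T : ℝ} (hT : T ≠ 0) (t : ℝ) :
    HasDerivAt (corrector k T) (k t - weightedMean 1 k T t) t := by
  have hK (t : ℝ) : HasDerivAt (fun t => ∫ s in (0 : ℝ)..t, k s) (k t) t :=
    (hk.integral_hasStrictDerivAt 0 t).hasDerivAt
  rw [funext (corrector_eq_sub_weightedMean hK hk T)]
  exact (hK t).sub (hasDerivAt_weightedMean_one hK hk hT t)

end WeightedMean

section RecurrentMean

variable {E F : Type*} [NormedAddCommGroup E] [NormedAddCommGroup F] [NormedSpace ℝ F]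
  {𝓣 : Filter ℝ} {w : ℝ → ℝ} {g : ℝ → E → F} {S : Set E}

theorem eventually_cocompact_forall_add {A : Type*} [AddGroup A] [TopologicalSpace A]
    [IsTopologicalAddGroup A] {P : A → Prop} (hP : ∀ᶠ a in cocompact A, P a) {K : Set A}
    (hK : IsCompact K) : ∀ᶠ a in cocompact A, ∀ b ∈ K, P (a + b) := by
  obtain ⟨C, hC, hCP⟩ := mem_cocompact.1 hP
  refine mem_cocompact.2 ⟨_, (hC.prod hK).image (f := fun p => p.1 - p.2) (by fun_prop),
    fun a ha b hb => hCP fun hab => ha ⟨(a + b, b), ⟨hab, hb⟩, add_sub_cancel_right a b⟩⟩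

namespace RemotelyRecurrentOn

theorem uniformContinuousOn_weightedMean (hg : RemotelyRecurrentOn 𝓣 g S) (hw : IsUnitWeight w) :
    UniformContinuousOn (fun p : ℝ × E × ℝ => weightedMean w (g · p.2.1) p.2.2 p.1)
      (Set.univ ×ˢ S ×ˢ Set.univ) := by
  refine Metric.uniformContinuousOn_iff_le.2 fun ε hε => ?_
  obtain ⟨δ, hδ, modulus⟩ := Metric.uniformContinuousOn_iff_le.1 hg.uniformContinuousOn ε hε
  refine ⟨δ / 2, half_pos hδ, ?_⟩
  rintro ⟨t, x, T⟩ ⟨-, hx, -⟩ ⟨t', x', T'⟩ ⟨-, hx', -⟩ hclose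
  simp only [Prod.dist_eq, max_le_iff] at hclose
  refine dist_weightedMean_le hw (hg.continuous_apply hx) (hg.continuous_apply hx') fun v hv =>
    modulus (_, x) ⟨trivial, hx⟩ (_, x') ⟨trivial, hx'⟩ (max_le ?_ (hclose.2.1.trans (by linarith)))
  calc dist (t + T * v) (t' + T' * v) ≤ dist t t' + dist (T * v) (T' * v) := dist_add_add_le _ _ _ _
    _ = dist t t' + dist T T' * v := by
        rw [Real.dist_eq (T * v), ← sub_mul, abs_mul, abs_of_nonneg hv.1, Real.dist_eq T]
    _ ≤ δ / 2 + δ / 2 * 1 := by gcongr; exacts [hclose.1, hv.1, hclose.2.2, hv.2]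
    _ = δ := by ring

theorem weightedMean (hg : RemotelyRecurrentOn 𝓣 g S) (hw : IsUnitWeight w) (T : ℝ) :
    RemotelyRecurrentOn 𝓣 (fun t x => weightedMean w (g · x) T t) S where
  bounded := hg.bounded.imp fun _ hC t x hx => norm_weightedMean_le hw (hC · x hx) T t
  uniformContinuousOn := (hg.uniformContinuousOn_weightedMean hw).comp
    (uniformContinuousOn_prodMk uniformContinuous_fst.uniformContinuousOn
      (uniformContinuousOn_prodMk uniformContinuous_snd.uniformContinuousOn
        uniformContinuous_const.uniformContinuousOn)) fun _ hp => ⟨trivial, hp.2, trivial⟩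
  recurrent ε hε := by
    filter_upwards [hg.recurrent ε hε] with τ hτ
    filter_upwards [eventually_cocompact_forall_add hτ
      (isCompact_Icc.image (continuous_const_mul T) : IsCompact ((T * ·) '' Set.Icc 0 1))]
      with t ht x hx
    refine dist_weightedMean_le hw (hg.continuous_apply hx) (hg.continuous_apply hx) fun v hv => ?_
    rw [add_right_comm]
    exact ht _ (Set.mem_image_of_mem _ hv) x hx

theorem corrector (hg : RemotelyRecurrentOn 𝓣 g S) (T : ℝ) :
    RemotelyRecurrentOn 𝓣 (fun t x => corrector (g · x) T t) S :=
  ((hg.weightedMean isUnitWeight_one_sub T).const_smul T).neg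

end RemotelyRecurrentOn

end RecurrentMean

section UniformMean

variable {X F : Type*} [NormedAddCommGroup F] [NormedSpace ℝ F]
  {w : ℝ → ℝ} {g h : ℝ → X → F} {g₀ h₀ : X → F} {S : Set X}

/-- The means of `g` over time intervals of length `T` converge to `g₀` as `T → ∞`, uniformly in
the position of the interval and in the parameter `x ∈ S`. -/
def HasUniformMeanOn (g : ℝ → X → F) (g₀ : X → F) (S : Set X) : Prop :=
  TendstoUniformlyOn (fun (p : ℝ × ℝ) x => weightedMean 1 (g · x) p.1 p.2) g₀ (atTop ×ˢ ⊤) S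

theorem hasUniformMeanOn_iff : HasUniformMeanOn g g₀ S ↔
    ∀ ε > 0, ∀ᶠ T in atTop, ∀ t, ∀ x ∈ S, dist (weightedMean 1 (g · x) T t) (g₀ x) ≤ ε := by
  simp only [HasUniformMeanOn, Metric.tendstoUniformlyOn_iff, ← principal_univ,
    eventually_prod_principal_iff, Set.mem_univ, true_imp_iff, dist_comm (g₀ _)]
  refine ⟨fun H ε hε => ?_, fun H ε hε => ?_⟩
  · filter_upwards [H ε hε] with T hT t x hx using (hT t x hx).le
  · filter_upwards [H (ε / 2) (half_pos hε)] with T hT t x hx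
    exact (hT t x hx).trans_lt (half_lt_self hε)

theorem hasUniformMeanOn_of_symmetricMean (hg : ∀ ε > 0, ∃ T₀ > 0, ∀ T ≥ T₀, ∀ s, ∀ x ∈ S,
    ‖(1 / (2 * T)) • (∫ t in -T..T, g (t + s) x) - g₀ x‖ ≤ ε) : HasUniformMeanOn g g₀ S := by
  refine hasUniformMeanOn_iff.2 fun ε hε => ?_
  obtain ⟨T₀, hT₀, hmean⟩ := hg ε hε
  filter_upwards [eventually_ge_atTop (2 * T₀)] with T hT t x hx
  have hT' : T / 2 ≠ 0 := by linarith [hT₀.trans_le (by linarith : T₀ ≤ T / 2)]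
  have := hmean (T / 2) (by linarith) (t + T / 2) x hx
  rwa [symmetricMean_eq_weightedMean (g · x) hT', mul_div_cancel₀ T two_ne_zero,
    add_sub_cancel_right, ← dist_eq_norm] at this

namespace HasUniformMeanOn

theorem tendsto_symmetricMean (hg : HasUniformMeanOn g g₀ S) {x : X} (hx : x ∈ S) :
    Tendsto (fun T : ℝ => (1 / (2 * T)) • ∫ t in -T..T, g t x) atTop (nhds (g₀ x)) := by
  have htime : Tendsto (fun T : ℝ => (2 * T, 0 - T)) atTop (atTop ×ˢ ⊤) :=
    (tendsto_id.const_mul_atTop two_pos).prodMk tendsto_top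
  refine ((TendstoUniformlyOn.tendsto_at hg hx).comp htime).congr' ?_
  filter_upwards [eventually_ne_atTop 0] with T hT
  simpa using (symmetricMean_eq_weightedMean (g · x) hT 0).symm

theorem mono {S' : Set X} (hg : HasUniformMeanOn g g₀ S') (hS : S ⊆ S') :
    HasUniformMeanOn g g₀ S :=
  TendstoUniformlyOn.mono hg hS

theorem sub (hg : HasUniformMeanOn g g₀ S) (hh : HasUniformMeanOn h h₀ S)
    (hg_cont : ∀ x ∈ S, Continuous (g · x)) (hh_cont : ∀ x ∈ S, Continuous (h · x)) :
    HasUniformMeanOn (fun t x => g t x - h t x) (g₀ - h₀) S := by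
  refine (TendstoUniformlyOn.sub hg hh).congr (.of_forall fun p x hx => ?_)
  simp only [Pi.sub_apply]
  rw [weightedMean_sub continuous_one (hg_cont x hx) (hh_cont x hx)]
  rfl

theorem const_smul (hg : HasUniformMeanOn g g₀ S) (c : ℝ) :
    HasUniformMeanOn (fun t x => c • g t x) (c • g₀) S := by
  refine ((uniformContinuous_const_smul c).comp_tendstoUniformlyOn hg).congr
    (.of_forall fun p x _ => ?_)
  simp only [Function.comp_apply, _root_.weightedMean, Pi.one_apply, one_smul,
    intervalIntegral.integral_smul]

theorem weightedMean (hg : HasUniformMeanOn g 0 S) (hg_cont : ∀ x ∈ S, Continuous (g · x))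
    (hw : IsUnitWeight w) (T : ℝ) :
    HasUniformMeanOn (fun t x => weightedMean w (g · x) T t) 0 S := by
  refine hasUniformMeanOn_iff.2 fun ε hε => ?_
  filter_upwards [hasUniformMeanOn_iff.1 hg ε hε] with R hR t x hx
  simp only [Pi.zero_apply, dist_zero_right] at hR ⊢
  rw [weightedMean_comm continuous_one hw.continuous (hg_cont x hx)]
  exact norm_weightedMean_le hw (hR · x hx) T t

theorem corrector (hg : HasUniformMeanOn g 0 S) (hg_cont : ∀ x ∈ S, Continuous (g · x)) (T : ℝ) :
    HasUniformMeanOn (fun t x => corrector (g · x) T t) 0 S := by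
  simpa [_root_.corrector] using (hg.weightedMean hg_cont isUnitWeight_one_sub T).const_smul (-T)

theorem remotelyRecurrentOn {E : Type*} [NormedAddCommGroup E] {𝓣 : Filter ℝ} {g : ℝ → E → F}
    {g₀ : E → F} {S : Set E} (hmean : HasUniformMeanOn g g₀ S) (hg : RemotelyRecurrentOn 𝓣 g S) :
    RemotelyRecurrentOn 𝓣 (fun _ => g₀) S := by
  refine .const ?_ ?_
  · refine TendstoUniformlyOn.uniformContinuousOn hmean (.of_forall fun p => ?_)
    exact (hg.uniformContinuousOn_weightedMean isUnitWeight_one).comp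
      (uniformContinuousOn_prodMk uniformContinuous_const.uniformContinuousOn
        (uniformContinuousOn_prodMk uniformContinuous_id.uniformContinuousOn
          uniformContinuous_const.uniformContinuousOn)) fun _ hx => ⟨trivial, hx, trivial⟩
  · obtain ⟨C, hC⟩ := hg.bounded
    obtain ⟨T, hT⟩ := (hasUniformMeanOn_iff.1 hmean 1 one_pos).exists
    refine ⟨C + 1, fun x hx => ?_⟩
    calc ‖g₀ x‖ ≤ ‖_root_.weightedMean 1 (g · x) T 0‖
          + dist (_root_.weightedMean 1 (g · x) T 0) (g₀ x) := by
          rw [dist_eq_norm]; exact norm_le_norm_add_norm_sub _ _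
      _ ≤ C + 1 := add_le_add (norm_weightedMean_le isUnitWeight_one (hC · x hx) T 0) (hT 0 x hx)

end HasUniformMeanOn

theorem hasUniformMeanOn_const [CompleteSpace F] (Φ : X → F) (S : Set X) :
    HasUniformMeanOn (fun _ => Φ) Φ S :=
  hasUniformMeanOn_iff.2 fun ε hε => .of_forall fun T t x _ => by simp [weightedMean, hε.le]

end UniformMean

section Derivative

variable {ι E F : Type*} [NormedAddCommGroup E] [NormedSpace ℝ E] [NormedAddCommGroup F]
  [NormedSpace ℝ F]

theorem uniformEquicontinuousOn_iff_dist_le {α β : Type*} [PseudoMetricSpace α]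
    [PseudoMetricSpace β] {φ : ι → β → α} {S : Set β} : UniformEquicontinuousOn φ S ↔
      ∀ ε > 0, ∃ δ > 0, ∀ i, ∀ x ∈ S, ∀ y ∈ S, dist x y ≤ δ → dist (φ i x) (φ i y) ≤ ε := by
  rw [(uniformity_basis_dist_le.inf_principal (S ×ˢ S)).uniformEquicontinuousOn_iff
    uniformity_basis_dist_le]
  exact ⟨fun H ε hε => (H ε hε).imp fun δ ⟨hδ, Hδ⟩ => ⟨hδ, fun i x hx y hy hxy =>
      Hδ x y ⟨hxy, hx, hy⟩ i⟩,
    fun H ε hε => (H ε hε).imp fun δ ⟨hδ, Hδ⟩ => ⟨hδ, fun x y hxy i =>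
      Hδ i x hxy.2.1 y hxy.2.2 hxy.1⟩⟩

-- Landau's inequality: a small function whose derivative oscillates little has a small derivative.
theorem norm_fderiv_le_of_norm_le {φ : E → F} {φ' : E → E →L[ℝ] F} {x : E} {δ m ε : ℝ}
    (hδ : 0 < δ) (hφ : ∀ y ∈ closedBall x δ, HasFDerivAt φ (φ' y) y)
    (hm : ∀ y ∈ closedBall x δ, ‖φ y‖ ≤ m) (hε : ∀ y ∈ closedBall x δ, ‖φ' y - φ' x‖ ≤ ε) :
    ‖φ' x‖ ≤ 2 * m / δ + ε := by
  have hx : x ∈ closedBall x δ := mem_closedBall_self hδ.le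
  have hm₀ : 0 ≤ m := (norm_nonneg _).trans (hm x hx)
  have hε₀ : 0 ≤ ε := (norm_nonneg _).trans (hε x hx)
  refine ContinuousLinearMap.opNorm_le_of_unit_norm (by positivity) fun v hv => ?_
  have hstep : ‖δ • v‖ = δ := by rw [norm_smul, hv, mul_one, Real.norm_of_nonneg hδ.le]
  have hy : x + δ • v ∈ closedBall x δ := by simp [hstep]
  have linearization : ‖φ (x + δ • v) - φ x - φ' x (δ • v)‖ ≤ ε * δ := by
    simpa [hstep] using (convex_closedBall x δ).norm_image_sub_le_of_norm_hasFDerivWithin_le'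
      (fun y hy => (hφ y hy).hasFDerivWithinAt) hε hx hy
  have : δ * ‖φ' x v‖ ≤ 2 * m + ε * δ :=
    calc δ * ‖φ' x v‖ = ‖φ' x (δ • v)‖ := by
          rw [map_smul, norm_smul, Real.norm_of_nonneg hδ.le]
      _ ≤ ‖φ (x + δ • v) - φ x‖ + ‖φ (x + δ • v) - φ x - φ' x (δ • v)‖ :=
          norm_le_norm_add_norm_sub _ _
      _ ≤ (m + m) + ε * δ := add_le_add (norm_sub_le_of_le (hm _ hy) (hm _ hx)) linearization
      _ = 2 * m + ε * δ := by ring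
  rw [div_add' _ _ _ hδ.ne', le_div_iff₀ hδ]
  linarith

theorem exists_dist_fderiv_le {φ : ι → E → F} {φ' : ι → E → E →L[ℝ] F} {S V : Set E} {η : ℝ}
    (hη : 0 < η) (hSV : ∀ x ∈ S, closedBall x η ⊆ V)
    (hφ : ∀ i, ∀ x ∈ V, HasFDerivAt (φ i) (φ' i x) x) (hφ' : UniformEquicontinuousOn φ' V)
    {ε : ℝ} (hε : 0 < ε) :
    ∃ m > 0, ∀ i j, (∀ y ∈ V, dist (φ i y) (φ j y) ≤ m) → ∀ x ∈ S, dist (φ' i x) (φ' j x) ≤ ε := by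
  obtain ⟨δ', hδ', modulus⟩ := uniformEquicontinuousOn_iff_dist_le.1 hφ' (ε / 4) (by positivity)
  obtain ⟨δ, hδ, hδδ', hδη⟩ : ∃ δ > 0, δ ≤ δ' ∧ δ ≤ η :=
    ⟨min δ' η, lt_min hδ' hη, min_le_left _ _, min_le_right _ _⟩
  refine ⟨ε * δ / 4, by positivity, fun i j hij x hx => ?_⟩
  have hV : closedBall x δ ⊆ V := (closedBall_subset_closedBall hδη).trans (hSV x hx)
  have oscillation (y) (hy : y ∈ closedBall x δ) :
      ‖(φ' i y - φ' j y) - (φ' i x - φ' j x)‖ ≤ ε / 2 := by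
    have hclose (k : ι) : ‖φ' k y - φ' k x‖ ≤ ε / 4 := by
      rw [← dist_eq_norm]
      exact modulus k y (hV hy) x (hV (mem_closedBall_self hδ.le)) (hy.trans hδδ')
    rw [sub_sub_sub_comm]
    exact (norm_sub_le_of_le (hclose i) (hclose j)).trans (by linarith)
  rw [dist_eq_norm]
  refine (norm_fderiv_le_of_norm_le (φ := fun y => φ i y - φ j y) hδ
    (fun y hy => (hφ i y (hV hy)).sub (hφ j y (hV hy)))
    (fun y hy => (dist_eq_norm _ _).symm.trans_le (hij y (hV hy))) oscillation).trans_eq ?_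
  field_simp
  ring

variable {𝓣 : Filter ℝ} {g : ℝ → E → F} {g' : ℝ → E → E →L[ℝ] F} {S V : Set E}

theorem RemotelyRecurrentOn.of_hasFDerivAt {η : ℝ} (hg : RemotelyRecurrentOn 𝓣 g V) (hη : 0 < η)
    (hSV : ∀ x ∈ S, closedBall x η ⊆ V) (hd : ∀ t, ∀ x ∈ V, HasFDerivAt (g t) (g' t x) x)
    (hg' : UniformEquicontinuousOn g' V) : RemotelyRecurrentOn 𝓣 g' S where
  bounded := by
    obtain ⟨C, hC⟩ := hg.bounded
    obtain ⟨δ', hδ', modulus⟩ := uniformEquicontinuousOn_iff_dist_le.1 hg' 1 one_pos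
    obtain ⟨δ, hδ, hδδ', hδη⟩ : ∃ δ > 0, δ ≤ δ' ∧ δ ≤ η :=
      ⟨min δ' η, lt_min hδ' hη, min_le_left _ _, min_le_right _ _⟩
    refine ⟨2 * C / δ + 1, fun t x hx => ?_⟩
    have hV : closedBall x δ ⊆ V := (closedBall_subset_closedBall hδη).trans (hSV x hx)
    exact norm_fderiv_le_of_norm_le hδ (fun y hy => hd t y (hV hy)) (fun y hy => hC t y (hV hy))
      fun y hy => (dist_eq_norm _ _).symm.trans_le
        (modulus t y (hV hy) x (hV (mem_closedBall_self hδ.le)) (hy.trans hδδ'))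
  uniformContinuousOn := by
    have hSV' : S ⊆ V := fun x hx => hSV x hx (mem_closedBall_self hη.le)
    refine Metric.uniformContinuousOn_iff_le.2 fun ε hε => ?_
    obtain ⟨m, hm, close⟩ := exists_dist_fderiv_le hη hSV hd hg' (half_pos hε)
    obtain ⟨δ, hδ, modulus⟩ := Metric.uniformContinuousOn_iff_le.1 hg.uniformContinuousOn m hm
    obtain ⟨δ', hδ', modulus'⟩ := uniformEquicontinuousOn_iff_dist_le.1 hg' (ε / 2) (half_pos hε)
    refine ⟨min δ δ', lt_min hδ hδ', ?_⟩
    rintro ⟨t, x⟩ ⟨-, hx⟩ ⟨s, y⟩ ⟨-, hy⟩ hclose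
    simp only [Prod.dist_eq, max_le_iff, le_min_iff] at hclose
    have in_time : dist (g' t x) (g' s x) ≤ ε / 2 := close t s (fun z hz =>
      modulus (t, z) ⟨trivial, hz⟩ (s, z) ⟨trivial, hz⟩ (by simp [Prod.dist_eq, hclose.1.1]))
      x hx
    have in_space : dist (g' s x) (g' s y) ≤ ε / 2 :=
      modulus' s x (hSV' hx) y (hSV' hy) hclose.2.2
    exact (dist_triangle _ _ _).trans ((add_le_add in_time in_space).trans_eq (add_halves ε))
  recurrent ε hε := by
    obtain ⟨m, hm, close⟩ := exists_dist_fderiv_le hη hSV hd hg' hε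
    filter_upwards [hg.recurrent m hm] with τ hτ
    filter_upwards [hτ] with t ht using close _ _ ht

variable {w : ℝ → ℝ}

theorem uniformEquicontinuousOn_weightedMean {X : Type*} [PseudoMetricSpace X] {k : ℝ → X → F}
    {S : Set X} (hk : UniformEquicontinuousOn k S) (hk_cont : ∀ x ∈ S, Continuous (k · x))
    (hw : IsUnitWeight w) :
    UniformEquicontinuousOn (fun (p : ℝ × ℝ) x => weightedMean w (k · x) p.1 p.2) S := by
  refine uniformEquicontinuousOn_iff_dist_le.2 fun ε hε => ?_
  obtain ⟨δ, hδ, modulus⟩ := uniformEquicontinuousOn_iff_dist_le.1 hk ε hε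
  exact ⟨δ, hδ, fun p x hx y hy hxy => dist_weightedMean_le hw (hk_cont x hx) (hk_cont y hy)
    fun v _ => modulus _ x hx y hy hxy⟩

theorem hasFDerivAt_weightedMean (hV : IsOpen V) (hg : ∀ x ∈ V, Continuous (g · x))
    (hg' : RemotelyRecurrentOn 𝓣 g' V) (hd : ∀ t, ∀ x ∈ V, HasFDerivAt (g t) (g' t x) x)
    (hw : IsUnitWeight w) (T t : ℝ) {x : E} (hx : x ∈ V) :
    HasFDerivAt (fun y => weightedMean w (g · y) T t) (weightedMean w (g' · x) T t) x := by
  obtain ⟨C, hC⟩ := hg'.bounded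
  have hw_cont := hw.continuous
  have integrand_cont {y : E} (hy : y ∈ V) : Continuous fun v => w v • g (t + T * v) y :=
    hw_cont.smul ((hg y hy).comp (by fun_prop))
  have integrand'_cont : Continuous fun v => w v • g' (t + T * v) x :=
    hw_cont.smul ((hg'.continuous_apply hx).comp (by fun_prop))
  refine intervalIntegral.hasFDerivAt_integral_of_dominated_of_fderiv_le
    (F := fun y v => w v • g (t + T * v) y) (F' := fun y v => w v • g' (t + T * v) y)
    (bound := fun _ => C)
    (hV.mem_nhds hx) ?_ ((integrand_cont hx).intervalIntegrable 0 1)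
    integrand'_cont.aestronglyMeasurable ?_ intervalIntegrable_const ?_
  · filter_upwards [hV.mem_nhds hx] with y hy using (integrand_cont hy).aestronglyMeasurable
  · refine .of_forall fun v hv y hy => hw.norm_smul_le ?_ (hC _ y hy)
    exact Set.Ioc_subset_Icc_self (Set.uIoc_of_le (zero_le_one (α := ℝ)) ▸ hv)
  · exact .of_forall fun v _ y hy => (hd _ y hy).const_smul (w v)

theorem exists_hasFDerivAt_of_hasUniformMeanOn [CompleteSpace F] {g₀ : E → F} {η : ℝ}
    (hmean : HasUniformMeanOn g g₀ V) (hV : IsOpen V) (hS : IsOpen S) (hη : 0 < η)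
    (hSV : ∀ x ∈ S, closedBall x η ⊆ V) (hg : RemotelyRecurrentOn 𝓣 g V)
    (hg' : RemotelyRecurrentOn 𝓣 g' V) (hd : ∀ t, ∀ x ∈ V, HasFDerivAt (g t) (g' t x) x)
    (hg'_equi : UniformEquicontinuousOn g' V) :
    ∃ g₀' : E → E →L[ℝ] F, (∀ x ∈ S, HasFDerivAt g₀ (g₀' x) x) ∧ HasUniformMeanOn g' g₀' S := by
  have hSV' : S ⊆ V := fun x hx => hSV x hx (mem_closedBall_self hη.le)
  have mean_deriv (p : ℝ × ℝ) (x) (hx : x ∈ V) : HasFDerivAt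
      (fun y => weightedMean 1 (g · y) p.1 p.2) (weightedMean 1 (g' · x) p.1 p.2) x :=
    hasFDerivAt_weightedMean hV (fun _ hy => hg.continuous_apply hy) hg' hd isUnitWeight_one _ _ hx
  have mean_equi := uniformEquicontinuousOn_weightedMean hg'_equi
    (fun _ hy => hg'.continuous_apply hy) isUnitWeight_one
  have cauchy : UniformCauchySeqOn (fun (p : ℝ × ℝ) x => weightedMean 1 (g' · x) p.1 p.2)
      (atTop ×ˢ ⊤) S := by
    intro u hu
    obtain ⟨ε, hε, hεu⟩ := uniformity_basis_dist_le.mem_iff.1 hu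
    obtain ⟨m, hm, close⟩ := exists_dist_fderiv_le hη hSV mean_deriv mean_equi hε
    filter_upwards [TendstoUniformlyOn.uniformCauchySeqOn hmean _ (dist_mem_uniformity hm)]
      with p hp x hx
    exact hεu (close p.1 p.2 (fun y hy => (hp y hy).le) x hx)
  choose! g₀' hg₀' using fun x (hx : x ∈ S) =>
    cauchy_map_iff_exists_tendsto.1 (cauchy.cauchy_map hx)
  have mean' : HasUniformMeanOn g' g₀' S := cauchy.tendstoUniformlyOn_of_tendsto hg₀'
  exact ⟨g₀', fun x hx => hasFDerivAt_of_tendstoUniformlyOn hS mean'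
    (fun p y hy => mean_deriv p y (hSV' hy))
    (fun y hy => TendstoUniformlyOn.tendsto_at hmean (hSV' hy)) hx, mean'⟩

end Derivative

section NearIdentity

variable {D E : Type*} [NormedAddCommGroup D] [NormedAddCommGroup E] [NormedSpace ℝ E]

theorem norm_le_two_mul_norm_add {a b : D} (hab : ‖b‖ ≤ ‖a‖ / 2) : ‖a‖ ≤ 2 * ‖a + b‖ := by
  have : ‖a‖ ≤ ‖a + b‖ + ‖b‖ := by simpa using norm_sub_le (a + b) b
  linarith

section LinearPerturbation

variable {B B' : E →L[ℝ] E}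

theorem norm_le_two_mul_norm_one_add_apply (hB : ‖B‖ ≤ 1 / 2) (v : E) :
    ‖v‖ ≤ 2 * ‖(1 + B) v‖ :=
  norm_le_two_mul_norm_add ((B.le_of_opNorm_le hB v).trans_eq (by ring))

variable [CompleteSpace E]

theorem one_add_apply_inverse_apply (hB : ‖B‖ ≤ 1 / 2) (b : E) :
    (1 + B) (Ring.inverse (1 + B) b) = b := by
  have hunit : IsUnit (1 + B) := by
    simpa using isUnit_one_sub_of_norm_lt_one (x := -B) (by rw [norm_neg]; linarith)
  rw [← mul_apply_eq_comp, Ring.mul_inverse_cancel _ hunit, one_apply_eq_self]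

theorem norm_inverse_one_add_apply_le (hB : ‖B‖ ≤ 1 / 2) (b : E) :
    ‖Ring.inverse (1 + B) b‖ ≤ 2 * ‖b‖ := by
  simpa [one_add_apply_inverse_apply hB] using
    norm_le_two_mul_norm_one_add_apply hB (Ring.inverse (1 + B) b)

theorem norm_inverse_one_add_apply_sub_le (hB : ‖B‖ ≤ 1 / 2) (hB' : ‖B'‖ ≤ 1 / 2) (b b' : E) :
    ‖Ring.inverse (1 + B) b - Ring.inverse (1 + B') b'‖ ≤
      2 * (‖b - b'‖ + ‖B - B'‖ * (2 * ‖b'‖)) := by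
  set z := Ring.inverse (1 + B) b
  set z' := Ring.inverse (1 + B') b'
  have hz : (1 + B) z = b := one_add_apply_inverse_apply hB b
  have hz' : (1 + B') z' = b' := one_add_apply_inverse_apply hB' b'
  have hdiff : (1 + B) (z - z') = (b - b') - (B - B') z' := by
    rw [map_sub, hz, ← hz']
    simp only [add_apply, sub_apply]
    abel
  have hbound : ‖(B - B') z'‖ ≤ ‖B - B'‖ * (2 * ‖b'‖) :=
    (B - B').le_opNorm_of_le (norm_inverse_one_add_apply_le hB' b')
  calc ‖z - z'‖ ≤ 2 * ‖(b - b') - (B - B') z'‖ :=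
        hdiff ▸ norm_le_two_mul_norm_one_add_apply hB (z - z')
    _ ≤ 2 * (‖b - b'‖ + ‖B - B'‖ * (2 * ‖b'‖)) := by
        gcongr
        exact (norm_sub_le _ _).trans (add_le_add_right hbound _)

theorem uniformContinuousOn_inverse_one_add_apply (C : ℝ) :
    UniformContinuousOn (fun p : (E →L[ℝ] E) × E => Ring.inverse (1 + p.1) p.2)
      (closedBall 0 (1 / 2) ×ˢ closedBall 0 C) := by
  refine (LipschitzOnWith.of_dist_le_mul (K := (2 * (1 + 2 * C)).toNNReal) ?_).uniformContinuousOn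
  rintro ⟨B, b⟩ ⟨hB, -⟩ ⟨B', b'⟩ ⟨hB', hb'⟩
  rw [mem_closedBall_zero_iff] at hB hB' hb'
  have hb_dist : ‖b - b'‖ ≤ dist (B, b) (B', b') := dist_eq_norm b b' ▸ le_max_right _ _
  have hB_dist : ‖B - B'‖ ≤ dist (B, b) (B', b') := dist_eq_norm B B' ▸ le_max_left _ _
  calc dist (Ring.inverse (1 + B) b) (Ring.inverse (1 + B') b')
      ≤ 2 * (‖b - b'‖ + ‖B - B'‖ * (2 * ‖b'‖)) :=
        (dist_eq_norm _ _).trans_le (norm_inverse_one_add_apply_sub_le hB hB' b b')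
    _ ≤ 2 * (dist (B, b) (B', b') + dist (B, b) (B', b') * (2 * C)) := by gcongr
    _ = 2 * (1 + 2 * C) * dist (B, b) (B', b') := by ring
    _ ≤ (2 * (1 + 2 * C)).toNNReal * dist (B, b) (B', b') :=
        mul_le_mul_of_nonneg_right (Real.le_coe_toNNReal _) dist_nonneg

theorem RemotelyRecurrentOn.inverse_one_add_apply {𝓣 : Filter ℝ} {A : ℝ → D → E →L[ℝ] E}
    {w : ℝ → D → E} {S : Set D} (hA : RemotelyRecurrentOn 𝓣 A S) (hw : RemotelyRecurrentOn 𝓣 w S)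
    (hA_le : ∀ t, ∀ x ∈ S, ‖A t x‖ ≤ 1 / 2) :
    RemotelyRecurrentOn 𝓣 (fun t x => Ring.inverse (1 + A t x) (w t x)) S := by
  obtain ⟨C, hC⟩ := hw.bounded
  have hinverse : RemotelyRecurrentOn 𝓣 (fun _ (p : (E →L[ℝ] E) × E) => Ring.inverse (1 + p.1) p.2)
      (closedBall 0 (1 / 2) ×ˢ closedBall 0 C) := by
    refine .const (uniformContinuousOn_inverse_one_add_apply C) ⟨2 * C, ?_⟩
    rintro ⟨B, b⟩ ⟨hB, hb⟩
    exact (norm_inverse_one_add_apply_le (mem_closedBall_zero_iff.1 hB) b).trans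
      (mul_le_mul_of_nonneg_left (mem_closedBall_zero_iff.1 hb) two_pos.le)
  exact hinverse.comp (hA.prodMk hw) fun t x hx =>
    ⟨mem_closedBall_zero_iff.2 (hA_le t x hx), mem_closedBall_zero_iff.2 (hC t x hx)⟩

end LinearPerturbation

section NonlinearPerturbation

variable {S : Set E}

theorem norm_sub_le_half_of_norm_fderiv_le {u : E → E} {u' : E → E →L[ℝ] E} (hS : Convex ℝ S)
    (hu : ∀ x ∈ S, HasFDerivAt u (u' x) x) (hu' : ∀ x ∈ S, ‖u' x‖ ≤ 1 / 2) {x y : E} (hx : x ∈ S)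
    (hy : y ∈ S) : ‖u x - u y‖ ≤ ‖x - y‖ / 2 :=
  (hS.norm_image_sub_le_of_norm_hasFDerivWithin_le (fun z hz => (hu z hz).hasFDerivWithinAt)
    hu' hy hx).trans_eq (by ring)

theorem injOn_add_of_norm_sub_le_half {u : D → D} {S : Set D}
    (hu : ∀ x ∈ S, ∀ y ∈ S, ‖u x - u y‖ ≤ ‖x - y‖ / 2) : S.InjOn fun x => x + u x := by
  intro x hx y hy hxy
  have hzero : x - y + (u x - u y) = 0 := by rw [← add_sub_add_comm]; exact sub_eq_zero.2 hxy
  simpa [hzero, sub_eq_zero] using norm_le_two_mul_norm_add (hu x hx y hy)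

open Asymptotics in
-- Only differentiability of `y + u (·, y)` is known in the direct implication, so the Lipschitz
-- bound is first needed to see that `y` varies at most linearly.
theorem hasDerivAt_add_comp_iff {u : ℝ → E → E} {y : ℝ → E} {t : ℝ} {a q : E} {B : E →L[ℝ] E}
    (hu : HasFDerivAt (fun p : ℝ × E => u p.1 p.2)
      ((ContinuousLinearMap.toSpanSingleton ℝ a).coprod B) (t, y t))
    (hB : ‖B‖ ≤ 1 / 2) (hlip : ∀ τ, ‖u τ (y τ) - u τ (y t)‖ ≤ ‖y τ - y t‖ / 2) :
    HasDerivAt (fun τ => y τ + u τ (y τ)) (a + (1 + B) q) t ↔ HasDerivAt y q t := by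
  have along {z : ℝ → E} {b : E} (hzt : z t = y t) (hz : HasDerivAt z b t) :
      HasDerivAt (fun τ => u τ (z τ)) (a + B b) t := by
    rw [← hzt] at hu
    have := HasFDerivAt.comp_hasDerivAt (f := fun τ => (τ, z τ)) t hu ((hasDerivAt_id t).prodMk hz)
    exact this.congr_deriv (by simp)
  refine ⟨fun hx => ?_, fun hy => ?_⟩
  · have hy_linear : (fun τ => y τ - y t) =O[nhds t] fun τ => τ - t := by
      refine .trans (.of_bound 2 (.of_forall fun τ => ?_))
        (hx.isBigO_sub.sub (along (z := fun _ => y t) rfl (hasDerivAt_const t (y t))).isBigO_sub)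
      refine (norm_le_two_mul_norm_add (hlip τ)).trans_eq (congrArg (2 * ‖·‖) ?_)
      abel
    have hpath : (fun τ => (τ, y τ) - (t, y t)) =O[nhds t] fun τ => τ - t :=
      (isBigO_refl _ _).prod_left hy_linear
    have hpath_tendsto : Tendsto (fun τ => (τ, y τ)) (nhds t) (nhds (t, y t)) :=
      tendsto_sub_nhds_zero_iff.1 (hpath.trans_tendsto
        (tendsto_sub_nhds_zero_iff.2 tendsto_id))
    have hu_remainder := (hu.isLittleO.comp_tendsto hpath_tendsto).trans_isBigO hpath
    refine .of_isLittleO (IsBigO.trans_isLittleO (.of_bound 2 (.of_forall fun τ => ?_))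
      (hx.isLittleO.sub hu_remainder))
    refine (norm_le_two_mul_norm_one_add_apply hB _).trans_eq (congrArg (2 * ‖·‖) ?_)
    simp only [Function.comp_apply, ContinuousLinearMap.coprod_apply,
      ContinuousLinearMap.toSpanSingleton_apply, add_apply, one_apply_eq_self, map_sub, map_smul]
    module
  · exact (hy.add (along rfl hy)).congr_deriv (by simp [add_left_comm])

end NonlinearPerturbation

end NearIdentity

section Oscillation

variable {D E F : Type*} [NormedAddCommGroup D] [NormedAddCommGroup E] [NormedSpace ℝ E]
  [NormedAddCommGroup F] [NormedSpace ℝ F]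
  {𝓣 : Filter ℝ} {w : ℝ → ℝ} {h k : ℝ → E → F} {h' : ℝ → E → E →L[ℝ] F} {S : Set E}

/-- The function `h` has zero mean and is remotely recurrent together with its space derivative
`h'`; in averaging, `h` is the deviation of a vector field from its time average. -/
structure IsSmoothOscillationOn (𝓣 : Filter ℝ) (h : ℝ → E → F) (h' : ℝ → E → E →L[ℝ] F)
    (S : Set E) : Prop where
  isOpen : IsOpen S
  recurrent : RemotelyRecurrentOn 𝓣 h S
  recurrent_fderiv : RemotelyRecurrentOn 𝓣 h' S
  hasFDerivAt : ∀ t, ∀ x ∈ S, HasFDerivAt (h t) (h' t x) x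
  hasMean : HasUniformMeanOn h 0 S
  hasMean_fderiv : HasUniformMeanOn h' 0 S

theorem exists_isSmoothOscillationOn [CompleteSpace F] {g : ℝ → E → F} {g₀ : E → F}
    {g' : ℝ → E → E →L[ℝ] F} {c : E} {r R : ℝ} (hrR : r < R)
    (hg : RemotelyRecurrentOn 𝓣 g (ball c R)) (hmean : HasUniformMeanOn g g₀ (ball c R))
    (hd : ∀ t, ∀ x ∈ ball c R, HasFDerivAt (g t) (g' t x) x)
    (hg' : UniformEquicontinuousOn g' (ball c R)) :
    ∃ h', IsSmoothOscillationOn 𝓣 (fun t x => g t x - g₀ x) h' (ball c r) := by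
  obtain ⟨ρ, hrρ, hρR⟩ := exists_between hrR
  have nested {a b : ℝ} (x) (hx : x ∈ ball c a) : closedBall x (b - a) ⊆ ball c b :=
    fun y hy => mem_ball.2 <| (dist_triangle y x c).trans_lt <| by
      linarith [mem_ball.1 hx, mem_closedBall.1 hy]
  have hρ : ball c ρ ⊆ ball c R := ball_subset_ball hρR.le
  have hr : ball c r ⊆ ball c ρ := ball_subset_ball hrρ.le
  have recurrent' : RemotelyRecurrentOn 𝓣 g' (ball c ρ) :=
    hg.of_hasFDerivAt (sub_pos.2 hρR) nested hd hg'
  obtain ⟨g₀', hd₀, mean'⟩ := exists_hasFDerivAt_of_hasUniformMeanOn (hmean.mono hρ) isOpen_ball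
    isOpen_ball (sub_pos.2 hrρ) nested (hg.mono hρ) recurrent' (fun t x hx => hd t x (hρ hx))
    (hg'.mono hρ)
  replace hg := hg.mono (hr.trans hρ)
  replace hmean := hmean.mono (hr.trans hρ)
  replace recurrent' := recurrent'.mono hr
  exact ⟨fun t x => g' t x - g₀' x,
    { isOpen := isOpen_ball
      recurrent := hg.sub (hmean.remotelyRecurrentOn hg)
      recurrent_fderiv := recurrent'.sub (mean'.remotelyRecurrentOn recurrent')
      hasFDerivAt := fun t x hx => (hd t x (hρ (hr hx))).sub (hd₀ x hx)
      hasMean := sub_self g₀ ▸ hmean.sub (hasUniformMeanOn_const g₀ _)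
        (fun x hx => hg.continuous_apply hx) fun _ _ => continuous_const
      hasMean_fderiv := sub_self g₀' ▸ mean'.sub (hasUniformMeanOn_const g₀' _)
        (fun x hx => recurrent'.continuous_apply hx) fun _ _ => continuous_const }⟩

/-- The averaging time `1 / √ν` belonging to the parameter `ν`: it tends to infinity as `ν → 0⁺`,
but slowly enough that its product with `ν` tends to `0`. -/
noncomputable def averagingTime (ν : ℝ) : ℝ := (√ν)⁻¹

theorem averagingTime_ne_zero {ν : ℝ} (hν : 0 < ν) : averagingTime ν ≠ 0 :=
  inv_ne_zero (Real.sqrt_ne_zero'.2 hν)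

theorem tendsto_averagingTime : Tendsto averagingTime (nhdsWithin 0 (Set.Ioi 0)) atTop := by
  have hsqrt : Tendsto Real.sqrt (nhdsWithin 0 (Set.Ioi 0)) (nhdsWithin 0 (Set.Ioi 0)) := by
    refine tendsto_nhdsWithin_iff.2 ⟨tendsto_nhdsWithin_of_tendsto_nhds ?_, ?_⟩
    · simpa using Real.continuous_sqrt.tendsto 0
    · filter_upwards [self_mem_nhdsWithin] with ν hν using Set.mem_Ioi.2 (Real.sqrt_pos.2 hν)
  exact tendsto_inv_nhdsGT_zero.comp hsqrt

theorem mul_averagingTime (ν : ℝ) : ν * averagingTime ν = √ν := by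
  rw [averagingTime, ← div_eq_mul_inv, Real.div_sqrt]

theorem continuousOn_averagingTime : ContinuousOn averagingTime (Set.Ioi 0) :=
  Real.continuous_sqrt.continuousOn.inv₀ fun _ hν => Real.sqrt_ne_zero'.2 hν

/-- The mean of `k` over `[t, t + averagingTime ν]`: the part of an oscillation `k` which
`averagingCorrector` leaves unremoved. -/
noncomputable def averagingResidual {X : Type*} (k : ℝ → X → F) (t : ℝ) (x : X) (ν : ℝ) : F :=
  weightedMean 1 (k · x) (averagingTime ν) t

/-- The function `U` of the change of variables `x = y + ν • U t y ν` associated with an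
oscillation `k`: it solves `∂U/∂t = k - averagingResidual k`. -/
noncomputable def averagingCorrector {X : Type*} (k : ℝ → X → F) (t : ℝ) (x : X) (ν : ℝ) : F :=
  corrector (k · x) (averagingTime ν) t

theorem RemotelyRecurrentOn.continuousOn_weightedMean_averagingTime {k : ℝ → D → F} {S : Set D}
    (hk : RemotelyRecurrentOn 𝓣 k S) (hw : IsUnitWeight w) : ContinuousOn
      (fun p : ℝ × D × ℝ => _root_.weightedMean w (k · p.2.1) (averagingTime p.2.2) p.1)
      (Set.univ ×ˢ S ×ˢ Set.Ioi 0) :=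
  (hk.uniformContinuousOn_weightedMean hw).continuousOn.comp
    (f := fun p : ℝ × D × ℝ => (p.1, p.2.1, averagingTime p.2.2))
    (continuousOn_fst.prodMk ((continuous_fst.comp continuous_snd).continuousOn.prodMk
      (continuousOn_averagingTime.comp (by fun_prop) fun _ hp => hp.2.2)))
    fun _ hp => ⟨trivial, hp.2.1, trivial⟩

theorem RemotelyRecurrentOn.continuousOn_averagingCorrector {k : ℝ → D → F} {S : Set D}
    (hk : RemotelyRecurrentOn 𝓣 k S) :
    ContinuousOn (fun p : ℝ × D × ℝ => averagingCorrector k p.1 p.2.1 p.2.2)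
      (Set.univ ×ˢ S ×ˢ Set.Ioi 0) :=
  ((continuousOn_averagingTime.comp (by fun_prop) fun _ hp => hp.2.2).smul
    (hk.continuousOn_weightedMean_averagingTime isUnitWeight_one_sub)).neg

theorem eventually_norm_smul_averagingCorrector_le {X : Type*} {k : ℝ → X → F} {S : Set X}
    (hk : ∃ C, ∀ t, ∀ x ∈ S, ‖k t x‖ ≤ C) {ε : ℝ} (hε : 0 < ε) :
    ∀ᶠ ν in nhdsWithin 0 (Set.Ioi 0), ∀ t, ∀ x ∈ S, ‖ν • averagingCorrector k t x ν‖ ≤ ε := by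
  obtain ⟨C, hC⟩ := hk
  have hsmall : Tendsto (fun ν => √ν * C) (nhdsWithin 0 (Set.Ioi 0)) (nhds 0) := by
    simpa using (tendsto_nhdsWithin_of_tendsto_nhds (Real.continuous_sqrt.tendsto 0)).mul_const C
  filter_upwards [hsmall.eventually_le_const hε] with ν hν t x hx
  rw [averagingCorrector, corrector, smul_neg, norm_neg, smul_smul, mul_averagingTime, norm_smul,
    Real.norm_of_nonneg (Real.sqrt_nonneg ν)]
  exact (mul_le_mul_of_nonneg_left (norm_weightedMean_le isUnitWeight_one_sub (hC · x hx) _ t)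
    (Real.sqrt_nonneg ν)).trans hν

theorem HasUniformMeanOn.eventually_norm_averagingResidual_le {X : Type*} {k : ℝ → X → F}
    {S : Set X} (hk : HasUniformMeanOn k 0 S) {ε : ℝ} (hε : 0 < ε) :
    ∀ᶠ ν in nhdsWithin 0 (Set.Ioi 0), ∀ t, ∀ x ∈ S, ‖averagingResidual k t x ν‖ ≤ ε := by
  simpa [averagingResidual] using
    tendsto_averagingTime.eventually (hasUniformMeanOn_iff.1 hk ε hε)

namespace IsSmoothOscillationOn

variable {ν t : ℝ} {x : E}

theorem remotelyRecurrentOn_sub_averagingResidual (hh : IsSmoothOscillationOn 𝓣 h h' S) (ν : ℝ) :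
    RemotelyRecurrentOn 𝓣 (fun t x => h t x - averagingResidual h t x ν) S :=
  hh.recurrent.sub (hh.recurrent.weightedMean isUnitWeight_one (averagingTime ν))

theorem continuousOn_sub_averagingResidual (hh : IsSmoothOscillationOn 𝓣 h h' S) :
    ContinuousOn (fun p : ℝ × E × ℝ => h p.1 p.2.1 - averagingResidual h p.1 p.2.1 p.2.2)
      (Set.univ ×ˢ S ×ˢ Set.Ioi 0) :=
  (hh.recurrent.uniformContinuousOn.continuousOn.comp
      (f := fun p : ℝ × E × ℝ => (p.1, p.2.1)) (by fun_prop) fun _ hp => ⟨trivial, hp.2.1⟩).sub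
    (hh.recurrent.continuousOn_weightedMean_averagingTime isUnitWeight_one)

theorem hasUniformMeanOn_averagingCorrector (hh : IsSmoothOscillationOn 𝓣 h h' S) (ν : ℝ) :
    HasUniformMeanOn (fun t x => averagingCorrector h t x ν) 0 S :=
  hh.hasMean.corrector (fun _ hx => hh.recurrent.continuous_apply hx) (averagingTime ν)

theorem hasUniformMeanOn_sub_averagingResidual (hh : IsSmoothOscillationOn 𝓣 h h' S) (ν : ℝ) :
    HasUniformMeanOn (fun t x => h t x - averagingResidual h t x ν) 0 S := by
  have hcont : ∀ x ∈ S, Continuous (h · x) := fun _ hx => hh.recurrent.continuous_apply hx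
  simpa only [sub_zero, averagingResidual] using hh.hasMean.sub
    (hh.hasMean.weightedMean hcont isUnitWeight_one (averagingTime ν)) hcont fun _ hx =>
      (hh.recurrent.weightedMean isUnitWeight_one (averagingTime ν)).continuous_apply hx

theorem hasFDerivAt_averagingResidual (hh : IsSmoothOscillationOn 𝓣 h h' S) (hx : x ∈ S) :
    HasFDerivAt (fun y => averagingResidual h t y ν) (averagingResidual h' t x ν) x :=
  hasFDerivAt_weightedMean hh.isOpen (fun _ hy => hh.recurrent.continuous_apply hy)
    hh.recurrent_fderiv hh.hasFDerivAt isUnitWeight_one _ _ hx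

theorem hasFDerivAt_averagingCorrector (hh : IsSmoothOscillationOn 𝓣 h h' S) (hx : x ∈ S) :
    HasFDerivAt (fun y => averagingCorrector h t y ν) (averagingCorrector h' t x ν) x :=
  ((hasFDerivAt_weightedMean hh.isOpen (fun _ hy => hh.recurrent.continuous_apply hy)
    hh.recurrent_fderiv hh.hasFDerivAt isUnitWeight_one_sub _ _ hx).const_smul _).neg

variable [CompleteSpace F]

theorem hasDerivAt_averagingCorrector (hh : IsSmoothOscillationOn 𝓣 h h' S) (hν : 0 < ν)
    (hx : x ∈ S) :
    HasDerivAt (fun s => averagingCorrector h s x ν) (h t x - averagingResidual h t x ν) t :=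
  hasDerivAt_corrector (hh.recurrent.continuous_apply hx) (averagingTime_ne_zero hν) t

theorem hasFDerivAt_uncurry_averagingCorrector (hh : IsSmoothOscillationOn 𝓣 h h' S)
    (hν : 0 < ν) (hx : x ∈ S) :
    HasFDerivAt (fun p : ℝ × E => averagingCorrector h p.1 p.2 ν)
      ((ContinuousLinearMap.toSpanSingleton ℝ (h t x - averagingResidual h t x ν)).coprod
        (averagingCorrector h' t x ν)) (t, x) := by
  have hmem : Set.univ ×ˢ S ∈ nhds (t, x) := prod_mem_nhds univ_mem (hh.isOpen.mem_nhds hx)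
  have time_deriv_cont : ContinuousAt
      (fun p : ℝ × E => h p.1 p.2 - averagingResidual h p.1 p.2 ν) (t, x) :=
    (hh.remotelyRecurrentOn_sub_averagingResidual ν).uniformContinuousOn.continuousOn
      |>.continuousAt hmem
  have corrector_deriv_cont := (hh.recurrent_fderiv.corrector (averagingTime ν)).uniformContinuousOn
    |>.continuousOn
  exact (hasStrictFDerivAt_uncurry_coprod
    (f := fun t x => averagingCorrector h t x ν)
    (f₁ := fun t x => ContinuousLinearMap.toSpanSingleton ℝ (h t x - averagingResidual h t x ν))
    (f₂ := fun t x => averagingCorrector h' t x ν)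
    (by filter_upwards [hmem] with p hp using
      (hh.hasDerivAt_averagingCorrector hν hp.2).hasFDerivAt)
    (by filter_upwards [hmem] with p hp using hh.hasFDerivAt_averagingCorrector hp.2)
    ((ContinuousLinearMap.toSpanSingletonCLE (𝕜 := ℝ)).continuous.continuousAt.comp time_deriv_cont)
    (corrector_deriv_cont.continuousAt hmem)).hasFDerivAt

end IsSmoothOscillationOn

end Oscillation

section Transformation

variable {D E : Type*} [NormedAddCommGroup D] [NormedAddCommGroup E]

theorem remotelyRecurrentOn_id {𝓣 : Filter ℝ} {S : Set E} (hS : Bornology.IsBounded S) :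
    RemotelyRecurrentOn 𝓣 (fun _ x => x) S :=
  .const uniformContinuous_id.uniformContinuousOn hS.exists_norm_le

theorem RemotelyRecurrentOn.comp_parameter {F Λ : Type*} [NormedAddCommGroup F]
    [NormedAddCommGroup Λ] {𝓣 : Filter ℝ} {f : ℝ → E → Λ → F} {g : ℝ → D → E} {S : Set D}
    {P : Set E} {I : Set Λ} {ν : Λ}
    (hf : RemotelyRecurrentOn 𝓣 (fun t (p : E × Λ) => f t p.1 p.2) (P ×ˢ I))
    (hg : RemotelyRecurrentOn 𝓣 g S) (hgP : ∀ t, ∀ x ∈ S, g t x ∈ P) (hν : ν ∈ I) :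
    RemotelyRecurrentOn 𝓣 (fun t x => f t (g t x) ν) S :=
  hf.comp (hg.prodMk (.const uniformContinuous_const.uniformContinuousOn ⟨‖ν‖, fun _ _ => le_rfl⟩))
    fun t x hx => ⟨hgP t x hx, hν⟩

theorem exists_gt_forall_Ioc_of_eventually {α : Type*} [LinearOrder α] [TopologicalSpace α]
    [OrderTopology α] [DenselyOrdered α] [NoMaxOrder α] {a : α} {p : α → Prop}
    (hp : ∀ᶠ x in nhdsWithin a (Set.Ioi a), p x) : ∃ b > a, ∀ x ∈ Set.Ioc a b, p x :=
  (mem_nhdsGT_iff_exists_Ioc_subset.1 hp).imp fun _ h => ⟨Set.mem_Ioi.1 h.1, fun _ hx => h.2 hx⟩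

theorem eventually_dist_add_le {F : Type*} [NormedAddCommGroup F] {f : ℝ → E → ℝ → F}
    {u : ℝ → E → ℝ → E} {S P : Set E} {νbar δ : ℝ}
    (hf : UniformContinuousOn (fun p : ℝ × E × ℝ => f p.1 p.2.1 p.2.2)
      (Set.univ ×ˢ P ×ˢ Set.Icc 0 νbar)) (hνbar : 0 < νbar) (hδ : 0 < δ)
    (hSP : ∀ x ∈ S, closedBall x δ ⊆ P)
    (hu : ∀ ε > 0, ∀ᶠ ν in nhdsWithin 0 (Set.Ioi 0), ∀ t, ∀ x ∈ S, ‖u t x ν‖ ≤ ε)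
    {ε : ℝ} (hε : 0 < ε) :
    ∀ᶠ ν in nhdsWithin 0 (Set.Ioi 0), ∀ t, ∀ x ∈ S, dist (f t (x + u t x ν) ν) (f t x 0) ≤ ε := by
  obtain ⟨δ', hδ', modulus⟩ := Metric.uniformContinuousOn_iff_le.1 hf ε hε
  filter_upwards [hu (min δ δ') (lt_min hδ hδ'), Ioc_mem_nhdsGT (lt_min hνbar hδ')]
    with ν hν hνmem t x hx
  obtain ⟨huδ, huδ'⟩ := le_min_iff.1 (hν t x hx)
  obtain ⟨hνν, hνδ'⟩ := le_min_iff.1 hνmem.2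
  refine modulus (t, _, ν) ⟨trivial, hSP x hx (by simpa using huδ), hνmem.1.le, hνν⟩
    (t, x, 0) ⟨trivial, hSP x hx (mem_closedBall_self hδ.le), le_rfl, hνbar.le⟩ ?_
  simp [Prod.dist_eq, huδ', abs_of_pos hνmem.1, hνδ']

variable [NormedSpace ℝ E]

/-- The perturbation `F` in the transformed equation `y' = ν • f₀ y + ν • F t y ν`, obtained by
solving `ν • ∂U/∂t + (1 + ν • ∂U/∂x) y' = ν • f` for `y'`, where `U = averagingCorrector h`,
`∂U/∂x = averagingCorrector h'`. -/
noncomputable def averagingRemainder (f : ℝ → E → ℝ → E) (f₀ : E → E) (h : ℝ → E → E)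
    (h' : ℝ → E → E →L[ℝ] E) (t : ℝ) (x : E) (ν : ℝ) : E :=
  Ring.inverse (1 + ν • averagingCorrector h' t x ν)
    (f t (x + ν • averagingCorrector h t x ν) ν - (h t x - averagingResidual h t x ν)) - f₀ x

variable [CompleteSpace E] {𝓣 : Filter ℝ} {f : ℝ → E → ℝ → E} {f₀ : E → E} {h : ℝ → E → E}
  {h' : ℝ → E → E →L[ℝ] E} {S P : Set E} {I : Set ℝ} {ν : ℝ}

theorem norm_averagingRemainder_le {t : ℝ} {x : E}
    (hU' : ‖ν • averagingCorrector h' t x ν‖ ≤ 1 / 2) (hh : h t x = f t x 0 - f₀ x) :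
    ‖averagingRemainder f f₀ h h' t x ν‖ ≤
      2 * (dist (f t (x + ν • averagingCorrector h t x ν) ν) (f t x 0)
        + ‖averagingResidual h t x ν‖ + ‖ν • averagingCorrector h' t x ν‖ * ‖f₀ x‖) := by
  set B := ν • averagingCorrector h' t x ν
  set fν := f t (x + ν • averagingCorrector h t x ν) ν
  have equation : (1 + B) (averagingRemainder f f₀ h h' t x ν) =
      fν - f t x 0 + averagingResidual h t x ν - B (f₀ x) := by
    rw [averagingRemainder, map_sub, one_add_apply_inverse_apply hU', add_apply,
      one_apply_eq_self, hh]
    abel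
  calc ‖averagingRemainder f f₀ h h' t x ν‖
      ≤ 2 * ‖fν - f t x 0 + averagingResidual h t x ν - B (f₀ x)‖ :=
        equation ▸ norm_le_two_mul_norm_one_add_apply hU' _
    _ ≤ 2 * (dist fν (f t x 0) + ‖averagingResidual h t x ν‖ + ‖B‖ * ‖f₀ x‖) := by
        rw [dist_eq_norm]
        gcongr
        exact norm_sub_le_of_le (norm_add_le _ _) (B.le_opNorm _)

theorem eventually_norm_averagingRemainder_le {νbar δ ε : ℝ} (hνbar : 0 < νbar)
    (hf : UniformContinuousOn (fun p : ℝ × E × ℝ => f p.1 p.2.1 p.2.2)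
      (Set.univ ×ˢ P ×ˢ Set.Icc 0 νbar)) (hf₀ : ∃ C, ∀ x ∈ S, ‖f₀ x‖ ≤ C)
    (hδ : 0 < δ) (hSP : ∀ x ∈ S, closedBall x δ ⊆ P)
    (hosc : IsSmoothOscillationOn 𝓣 h h' S) (hh : ∀ t, ∀ x ∈ S, h t x = f t x 0 - f₀ x)
    (hε : 0 < ε) : ∀ᶠ ν in nhdsWithin 0 (Set.Ioi 0), ∀ t, ∀ x ∈ S,
      ‖averagingRemainder f f₀ h h' t x ν‖ ≤ ε := by
  obtain ⟨C, hC₀, hC⟩ : ∃ C > 0, ∀ x ∈ S, ‖f₀ x‖ ≤ C :=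
    hf₀.elim fun C hC => ⟨max C 1, by positivity, fun x hx => (hC x hx).trans (le_max_left _ _)⟩
  have hε' : 0 < ε / 6 := by positivity
  filter_upwards [eventually_dist_add_le hf hνbar hδ hSP
      (fun _ => eventually_norm_smul_averagingCorrector_le hosc.recurrent.bounded) hε',
    hosc.hasMean.eventually_norm_averagingResidual_le hε',
    eventually_norm_smul_averagingCorrector_le hosc.recurrent_fderiv.bounded one_half_pos,
    eventually_norm_smul_averagingCorrector_le hosc.recurrent_fderiv.bounded (div_pos hε' hC₀)]
    with ν hf_close hres hhalf hU' t x hx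
  calc ‖averagingRemainder f f₀ h h' t x ν‖
      ≤ 2 * (ε / 6 + ε / 6 + ε / 6 / C * C) := by
        refine (norm_averagingRemainder_le (hhalf t x hx) (hh t x hx)).trans ?_
        gcongr
        exacts [hf_close t x hx, hres t x hx, hU' t x hx, hC x hx]
    _ = ε := by field_simp; ring

namespace IsSmoothOscillationOn

theorem remotelyRecurrentOn_averagingRemainder (hosc : IsSmoothOscillationOn 𝓣 h h' S)
    (hf : RemotelyRecurrentOn 𝓣 (fun t (p : E × ℝ) => f t p.1 p.2) (P ×ˢ I))
    (hf₀ : RemotelyRecurrentOn 𝓣 (fun _ => f₀) S) (hS : Bornology.IsBounded S) (hν : ν ∈ I)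
    (hP : ∀ t, ∀ x ∈ S, x + ν • averagingCorrector h t x ν ∈ P)
    (hU' : ∀ t, ∀ x ∈ S, ‖ν • averagingCorrector h' t x ν‖ ≤ 1 / 2) :
    RemotelyRecurrentOn 𝓣 (fun t x => averagingRemainder f f₀ h h' t x ν) S := by
  have hU := hosc.recurrent.corrector (averagingTime ν)
  have transported := hf.comp_parameter ((remotelyRecurrentOn_id hS).add (hU.const_smul ν)) hP hν
  exact (((hosc.recurrent_fderiv.corrector _).const_smul ν).inverse_one_add_apply
    (transported.sub (hosc.remotelyRecurrentOn_sub_averagingResidual ν)) hU').sub hf₀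

omit [CompleteSpace E] in
theorem exists_forall_Ioc_add_averagingCorrector_mem (hosc : IsSmoothOscillationOn 𝓣 h h' S)
    {νbar δ : ℝ} (hνbar : 0 < νbar) (hδ : 0 < δ) (hSP : ∀ x ∈ S, closedBall x δ ⊆ P) :
    ∃ ν₀ > 0, ν₀ ≤ νbar ∧ ∀ ν ∈ Set.Ioc 0 ν₀,
      (∀ t, ∀ x ∈ S, x + ν • averagingCorrector h t x ν ∈ P) ∧
      ∀ t, ∀ x ∈ S, ‖ν • averagingCorrector h' t x ν‖ ≤ 1 / 2 := by
  obtain ⟨ν₀, hν₀, hrange⟩ := exists_gt_forall_Ioc_of_eventually <|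
    (eventually_norm_smul_averagingCorrector_le hosc.recurrent.bounded hδ).and <|
    (eventually_norm_smul_averagingCorrector_le hosc.recurrent_fderiv.bounded one_half_pos).and
    (Ioc_mem_nhdsGT hνbar)
  exact ⟨ν₀, hν₀, (hrange ν₀ ⟨hν₀, le_rfl⟩).2.2.2, fun ν hν =>
    ⟨fun t x hx => hSP x hx (by simpa using (hrange ν hν).1 t x hx), (hrange ν hν).2.1⟩⟩

omit [CompleteSpace E] in
theorem eventually_norm_averagingCorrector_averagingResidual_le
    (hosc : IsSmoothOscillationOn 𝓣 h h' S) {ε : ℝ} (hε : 0 < ε) :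
    ∀ᶠ ν in nhdsWithin 0 (Set.Ioi 0), ∀ t, ∀ x ∈ S,
      ‖ν • averagingCorrector h t x ν‖ ≤ ε ∧ ‖ν • averagingCorrector h' t x ν‖ ≤ ε ∧
      ‖averagingResidual h t x ν‖ ≤ ε ∧ ‖averagingResidual h' t x ν‖ ≤ ε := by
  filter_upwards [eventually_norm_smul_averagingCorrector_le hosc.recurrent.bounded hε,
    eventually_norm_smul_averagingCorrector_le hosc.recurrent_fderiv.bounded hε,
    hosc.hasMean.eventually_norm_averagingResidual_le hε,
    hosc.hasMean_fderiv.eventually_norm_averagingResidual_le hε] with ν h₁ h₂ h₃ h₄ t x hx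
  exact ⟨h₁ t x hx, h₂ t x hx, h₃ t x hx, h₄ t x hx⟩

variable (hosc : IsSmoothOscillationOn 𝓣 h h' S) (hS : Convex ℝ S)
  (hU' : ∀ t, ∀ x ∈ S, ‖ν • averagingCorrector h' t x ν‖ ≤ 1 / 2)
include hosc hS hU'

omit [CompleteSpace E] in
theorem norm_smul_averagingCorrector_sub_le {x y : E} (hx : x ∈ S) (hy : y ∈ S) (t : ℝ) :
    ‖ν • averagingCorrector h t x ν - ν • averagingCorrector h t y ν‖ ≤ ‖x - y‖ / 2 :=
  norm_sub_le_half_of_norm_fderiv_le hS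
    (fun _ hz => (hosc.hasFDerivAt_averagingCorrector hz).const_smul ν) (hU' t) hx hy

omit [CompleteSpace E] in
theorem injOn_add_averagingCorrector (t : ℝ) :
    S.InjOn fun x => x + ν • averagingCorrector h t x ν :=
  injOn_add_of_norm_sub_le_half fun _ hx _ hy =>
    hosc.norm_smul_averagingCorrector_sub_le hS hU' hx hy t

theorem hasDerivAt_add_averagingCorrector_iff (hν : 0 < ν) {y : ℝ → E} (hy : ∀ t, y t ∈ S)
    (t : ℝ) :
    HasDerivAt (fun τ => y τ + ν • averagingCorrector h τ (y τ) ν)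
        (ν • f t (y t + ν • averagingCorrector h t (y t) ν) ν) t ↔
      HasDerivAt y (ν • f₀ (y t) + ν • averagingRemainder f f₀ h h' t (y t) ν) t := by
  have hjoint : HasFDerivAt (fun p : ℝ × E => ν • averagingCorrector h p.1 p.2 ν)
      ((ContinuousLinearMap.toSpanSingleton ℝ
        (ν • (h t (y t) - averagingResidual h t (y t) ν))).coprod
        (ν • averagingCorrector h' t (y t) ν)) (t, y t) :=
    ((hosc.hasFDerivAt_uncurry_averagingCorrector hν (hy t)).const_smul ν).congr_fderiv
      (by ext <;> simp)
  rw [← hasDerivAt_add_comp_iff (u := fun τ x => ν • averagingCorrector h τ x ν) (y := y) hjoint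
    (hU' t _ (hy t)) fun τ => hosc.norm_smul_averagingCorrector_sub_le hS hU' (hy τ) (hy t) τ]
  congr! 1
  rw [averagingRemainder, ← smul_add, add_sub_cancel, map_smul,
    one_add_apply_inverse_apply (hU' t _ (hy t)), ← smul_add, add_sub_cancel]

end IsSmoothOscillationOn

end Transformation

section Averaging

variable {E : Type*} [NormedAddCommGroup E] [NormedSpace ℝ E] [CompleteSpace E]
  {f : ℝ → E → ℝ → E} {f₀ : E → E} {c : E} {s r₀ νbar : ℝ}

theorem RAPUniform.exists_isSmoothOscillationOn (hs : s < r₀) (hνbar : 0 ≤ νbar)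
    (hRAP : RAPUniform (fun t (p : E × ℝ) => f t p.1 p.2) (closedBall c r₀ ×ˢ Set.Icc 0 νbar))
    (hdiff : ∀ t, ∀ x ∈ ball c r₀, DifferentiableAt ℝ (fun y => f t y 0) x)
    (hdcont : ∀ ε > 0, ∃ δ > 0, ∀ t, ∀ x ∈ ball c r₀, ∀ y ∈ ball c r₀, ‖x - y‖ < δ →
      ‖fderiv ℝ (fun z => f t z 0) x - fderiv ℝ (fun z => f t z 0) y‖ ≤ ε)
    (havg : ∀ ε > 0, ∃ T₀ > 0, ∀ T ≥ T₀, ∀ s : ℝ, ∀ x ∈ closedBall c r₀,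
      ‖(1 / (2 * T)) • (∫ t in -T..T, f (t + s) x 0) - f₀ x‖ ≤ ε) :
    ∃ 𝓣 : Filter ℝ, (∀ A ∈ 𝓣, RelativelyDense A) ∧
      RemotelyRecurrentOn 𝓣 (fun t (p : E × ℝ) => f t p.1 p.2)
        (closedBall c r₀ ×ˢ Set.Icc 0 νbar) ∧
      RemotelyRecurrentOn 𝓣 (fun _ => f₀) (ball c s) ∧
      ∃ h', IsSmoothOscillationOn 𝓣 (fun t x => f t x 0 - f₀ x) h' (ball c s) := by
  obtain ⟨𝓣, h𝓣, recurrent⟩ := hRAP.exists_remotelyRecurrentOn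
  have recurrent₀ : RemotelyRecurrentOn 𝓣 (fun t x => f t x 0) (closedBall c r₀) :=
    recurrent.comp_parameter (remotelyRecurrentOn_id isBounded_closedBall) (fun _ _ hx => hx)
      ⟨le_rfl, hνbar⟩
  have mean : HasUniformMeanOn (fun t x => f t x 0) f₀ (closedBall c r₀) :=
    hasUniformMeanOn_of_symmetricMean havg
  have equicontinuous : UniformEquicontinuousOn (fun t => fderiv ℝ (fun z => f t z 0))
      (ball c r₀) := by
    refine uniformEquicontinuousOn_iff_dist_le.2 fun ε hε => ?_
    obtain ⟨δ, hδ, modulus⟩ := hdcont ε hε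
    refine ⟨δ / 2, half_pos hδ, fun t x hx y hy hxy => ?_⟩
    rw [dist_eq_norm] at hxy ⊢
    exact modulus t x hx y hy (hxy.trans_lt (half_lt_self hδ))
  have hsub : ball c s ⊆ closedBall c r₀ := (ball_subset_ball hs.le).trans ball_subset_closedBall
  exact ⟨𝓣, h𝓣, recurrent, (mean.mono hsub).remotelyRecurrentOn (recurrent₀.mono hsub),
    _root_.exists_isSmoothOscillationOn hs (recurrent₀.mono ball_subset_closedBall)
      (mean.mono ball_subset_closedBall) (fun t x hx => (hdiff t x hx).hasFDerivAt) equicontinuous⟩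

theorem averaging_change_of_variables_general (hνbar : 0 < νbar)
    (hRAP : RAPUniform (fun t (p : E × ℝ) => f t p.1 p.2) (closedBall c r₀ ×ˢ Set.Icc 0 νbar))
    (hdiff : ∀ t, ∀ x ∈ ball c r₀, DifferentiableAt ℝ (fun y => f t y 0) x)
    (hdcont : ∀ ε > 0, ∃ δ > 0, ∀ t, ∀ x ∈ ball c r₀, ∀ y ∈ ball c r₀, ‖x - y‖ < δ →
      ‖fderiv ℝ (fun z => f t z 0) x - fderiv ℝ (fun z => f t z 0) y‖ ≤ ε)
    (havg : ∀ ε > 0, ∃ T₀ > 0, ∀ T ≥ T₀, ∀ s : ℝ, ∀ x ∈ closedBall c r₀,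
      ‖(1 / (2 * T)) • (∫ t in -T..T, f (t + s) x 0) - f₀ x‖ ≤ ε) {r : ℝ} (hr : r < r₀) :
    ∃ ν₀ > 0, ν₀ ≤ νbar ∧ ∃ (U Ut F : ℝ → E → ℝ → E) (Ux Gx : ℝ → E → ℝ → E →L[ℝ] E),
      ContinuousOn (fun p : ℝ × E × ℝ => U p.1 p.2.1 p.2.2)
        (Set.univ ×ˢ closedBall c r ×ˢ Set.Ioc 0 ν₀) ∧
      (∀ ν ∈ Set.Ioc 0 ν₀, RAPUniform (fun t x => U t x ν) (closedBall c r) ∧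
        ∀ x ∈ closedBall c r, ∃ m : E,
          Tendsto (fun T : ℝ => (1 / (2 * T)) • ∫ t in -T..T, U t x ν) atTop (nhds m)) ∧
      (∀ ν ∈ Set.Ioc 0 ν₀, ∀ x ∈ closedBall c r, ∀ t : ℝ,
        HasDerivAt (fun τ => U τ x ν) (Ut t x ν) t ∧
        HasFDerivAt (fun y => U t y ν) (Ux t x ν) x) ∧
      ContinuousOn (fun p : ℝ × E × ℝ => Ut p.1 p.2.1 p.2.2)
        (Set.univ ×ˢ closedBall c r ×ˢ Set.Ioc 0 ν₀) ∧
      ContinuousOn (fun p : ℝ × E × ℝ => Ux p.1 p.2.1 p.2.2)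
        (Set.univ ×ˢ closedBall c r ×ˢ Set.Ioc 0 ν₀) ∧
      (∀ ν ∈ Set.Ioc 0 ν₀, RAPUniform (fun t x => Ut t x ν) (closedBall c r) ∧
        RAPUniform (fun t x => Ux t x ν) (closedBall c r) ∧
        ∀ x ∈ closedBall c r, ∃ m : E,
          Tendsto (fun T : ℝ => (1 / (2 * T)) • ∫ t in -T..T, Ut t x ν) atTop (nhds m)) ∧
      (∀ ν ∈ Set.Ioc 0 ν₀, ∀ x ∈ closedBall c r, ∀ t : ℝ,
        HasFDerivAt (fun y => Ut t y ν - f t y 0 + f₀ y) (Gx t x ν) x) ∧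
      (∀ ε > 0, ∃ ν₁ > 0, ∀ ν ∈ Set.Ioc 0 ν₀, ν ≤ ν₁ → ∀ t : ℝ, ∀ x ∈ closedBall c r,
        ‖ν • U t x ν‖ ≤ ε ∧ ‖ν • Ux t x ν‖ ≤ ε ∧
        ‖Ut t x ν - f t x 0 + f₀ x‖ ≤ ε ∧ ‖Gx t x ν‖ ≤ ε) ∧
      (∀ ν ∈ Set.Ioc 0 ν₀, (∀ t : ℝ, Set.InjOn (fun y => y + ν • U t y ν) (closedBall c r)) ∧
        RAPUniform (fun t x => F t x ν) (closedBall c r) ∧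
        (∀ y : ℝ → E, (∀ t, y t ∈ closedBall c r) → ∀ t : ℝ,
          HasDerivAt (fun τ => y τ + ν • U τ (y τ) ν) (ν • f t (y t + ν • U t (y t) ν) ν) t ↔
          HasDerivAt y (ν • f₀ (y t) + ν • F t (y t) ν) t)) ∧
      (∀ ε > 0, ∃ ν₂ > 0, ∀ ν ∈ Set.Ioc 0 ν₀, ν ≤ ν₂ → ∀ t : ℝ, ∀ x ∈ closedBall c r,
        ‖F t x ν‖ ≤ ε) := by
  obtain ⟨s, hrs, hsr₀⟩ := exists_between hr
  obtain ⟨𝓣, h𝓣, hf, hf₀, h', hosc⟩ := hRAP.exists_isSmoothOscillationOn hsr₀ hνbar.le hdiff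
    hdcont havg
  set h : ℝ → E → E := fun t x => f t x 0 - f₀ x
  have hrS : closedBall c r ⊆ ball c s := closedBall_subset_ball hrs
  have hP : ∀ x ∈ ball c s, closedBall x (r₀ - s) ⊆ closedBall c r₀ := fun x hx =>
    closedBall_subset_closedBall' (by linarith [mem_ball.1 hx])
  obtain ⟨ν₀, hν₀, hν₀le, hrange⟩ := hosc.exists_forall_Ioc_add_averagingCorrector_mem hνbar
    (sub_pos.2 hsr₀) hP
  have hdomain : Set.univ ×ˢ closedBall c r ×ˢ Set.Ioc 0 ν₀ ⊆
      (Set.univ : Set ℝ) ×ˢ ball c s ×ˢ Set.Ioi 0 :=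
    Set.prod_mono le_rfl (Set.prod_mono hrS Set.Ioc_subset_Ioi_self)
  have hrap {V : Type _} [NormedAddCommGroup V] {φ : ℝ → E → V}
      (hφ : RemotelyRecurrentOn 𝓣 φ (ball c s)) : RAPUniform φ (closedBall c r) :=
    (hφ.mono hrS).rapUniform h𝓣
  have hG (t x ν) : h t x - averagingResidual h t x ν - f t x 0 + f₀ x =
      -averagingResidual h t x ν := by simp only [h]; abel
  refine ⟨ν₀, hν₀, hν₀le,
    averagingCorrector h, fun t x ν => h t x - averagingResidual h t x ν,
    averagingRemainder f f₀ h h',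
    averagingCorrector h', fun t x ν => -averagingResidual h' t x ν,
    hosc.recurrent.continuousOn_averagingCorrector.mono hdomain,
    fun ν _ => ⟨hrap (hosc.recurrent.corrector _), fun x hx =>
      ⟨0, (hosc.hasUniformMeanOn_averagingCorrector ν).tendsto_symmetricMean (hrS hx)⟩⟩,
    fun ν hν x hx t => ⟨hosc.hasDerivAt_averagingCorrector hν.1 (hrS hx),
      hosc.hasFDerivAt_averagingCorrector (hrS hx)⟩,
    hosc.continuousOn_sub_averagingResidual.mono hdomain,
    hosc.recurrent_fderiv.continuousOn_averagingCorrector.mono hdomain,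
    fun ν _ => ⟨hrap (hosc.remotelyRecurrentOn_sub_averagingResidual ν),
      hrap (hosc.recurrent_fderiv.corrector _), fun x hx =>
      ⟨0, (hosc.hasUniformMeanOn_sub_averagingResidual ν).tendsto_symmetricMean (hrS hx)⟩⟩,
    fun ν _ x hx t => ?_, fun ε hε => ?_, fun ν hν => ?_, fun ε hε => ?_⟩
  · simpa only [hG] using (hosc.hasFDerivAt_averagingResidual (hrS hx)).fun_neg
  · obtain ⟨ν₁, hν₁, hsmall⟩ := exists_gt_forall_Ioc_of_eventually
      (hosc.eventually_norm_averagingCorrector_averagingResidual_le hε)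
    refine ⟨ν₁, hν₁, fun ν hν hle t x hx => ?_⟩
    simpa only [hG, norm_neg] using hsmall ν ⟨hν.1, hle⟩ t x (hrS hx)
  · obtain ⟨hmaps, hU'⟩ := hrange ν hν
    exact ⟨fun t => (hosc.injOn_add_averagingCorrector (convex_ball c s) hU' t).mono hrS,
      hrap <| hosc.remotelyRecurrentOn_averagingRemainder hf hf₀ isBounded_ball
        ⟨hν.1.le, hν.2.trans hν₀le⟩ hmaps hU',
      fun y hy => hosc.hasDerivAt_add_averagingCorrector_iff (convex_ball c s) hU' hν.1
        fun t => hrS (hy t)⟩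
  · obtain ⟨ν₂, hν₂, hsmall⟩ := exists_gt_forall_Ioc_of_eventually <|
      eventually_norm_averagingRemainder_le hνbar hf.uniformContinuousOn
        (hf₀.bounded.imp fun _ hC => hC 0) (sub_pos.2 hsr₀) hP hosc (fun _ _ _ => rfl) hε
    exact ⟨ν₂, hν₂, fun ν hν hle t x hx => hsmall ν ⟨hν.1, hle⟩ t x (hrS hx)⟩

end Averaging

/-- Lemma 3.4: the averaging change of variables
`x = y + ν·U(t,y,ν)` for `x' = ν f_ν(t,x)`. -/
theorem averaging_change_of_variables {n : ℕ} (r₀ νbar : ℝ)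
    (hr₀ : 0 < r₀) (hνbar : 0 < νbar)
    (f : ℝ → EuclideanSpace ℝ (Fin n) → ℝ → EuclideanSpace ℝ (Fin n))
    (f₀ : EuclideanSpace ℝ (Fin n) → EuclideanSpace ℝ (Fin n))
    (hcont : ContinuousOn
      (fun p : ℝ × EuclideanSpace ℝ (Fin n) × ℝ => f p.1 p.2.1 p.2.2)
      (Set.univ ×ˢ Metric.closedBall 0 r₀ ×ˢ Set.Icc 0 νbar))
    (hRAP : RAPUniform (fun t (p : EuclideanSpace ℝ (Fin n) × ℝ) => f t p.1 p.2)
      (Metric.closedBall 0 r₀ ×ˢ Set.Icc 0 νbar))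
    (hdiff : ∀ t : ℝ, ∀ ν ∈ Set.Icc (0:ℝ) νbar,
      ∀ x ∈ Metric.ball (0 : EuclideanSpace ℝ (Fin n)) r₀,
      DifferentiableAt ℝ (fun y => f t y ν) x)
    (hdcont : ∀ ε > 0, ∃ δ > 0, ∀ t : ℝ, ∀ ν ∈ Set.Icc (0:ℝ) νbar,
      ∀ x ∈ Metric.ball (0 : EuclideanSpace ℝ (Fin n)) r₀,
      ∀ y ∈ Metric.ball (0 : EuclideanSpace ℝ (Fin n)) r₀, ‖x - y‖ < δ →
      ‖fderiv ℝ (fun z => f t z ν) x - fderiv ℝ (fun z => f t z ν) y‖ ≤ ε)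
    (havg : ∀ ε > 0, ∃ T₀ > 0, ∀ T ≥ T₀, ∀ s : ℝ,
      ∀ x ∈ Metric.closedBall (0 : EuclideanSpace ℝ (Fin n)) r₀,
      ‖(1 / (2 * T)) • (∫ t in -T..T, f (t + s) x 0) - f₀ x‖ ≤ ε) :
    ∀ r, 0 < r → r < r₀ → ∃ ν₀ > 0, ν₀ ≤ νbar ∧
      ∃ (U Ut F : ℝ → EuclideanSpace ℝ (Fin n) → ℝ → EuclideanSpace ℝ (Fin n))
        (Ux Gx : ℝ → EuclideanSpace ℝ (Fin n) → ℝ →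
          (EuclideanSpace ℝ (Fin n) →L[ℝ] EuclideanSpace ℝ (Fin n))),
        -- U is continuous on ℝ × B[0,r] × (0,ν₀]
        ContinuousOn (fun p : ℝ × EuclideanSpace ℝ (Fin n) × ℝ => U p.1 p.2.1 p.2.2)
          (Set.univ ×ˢ Metric.closedBall 0 r ×ˢ Set.Ioc 0 ν₀) ∧
        -- (1) for each ν, U(·,·,ν) is RAP in t uniformly in x and has a mean value
        (∀ ν ∈ Set.Ioc (0:ℝ) ν₀,
          RAPUniform (fun t x => U t x ν) (Metric.closedBall 0 r) ∧
          ∀ x ∈ Metric.closedBall (0 : EuclideanSpace ℝ (Fin n)) r,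
            ∃ m : EuclideanSpace ℝ (Fin n),
              Filter.Tendsto (fun T : ℝ => (1 / (2 * T)) • ∫ t in -T..T, U t x ν)
                Filter.atTop (nhds m)) ∧
        -- (2) ∂U/∂t and ∂U/∂x exist, are continuous, RAP in t, and have mean values
        (∀ ν ∈ Set.Ioc (0:ℝ) ν₀,
          ∀ x ∈ Metric.closedBall (0 : EuclideanSpace ℝ (Fin n)) r, ∀ t : ℝ,
          HasDerivAt (fun τ => U τ x ν) (Ut t x ν) t ∧
          HasFDerivAt (fun y => U t y ν) (Ux t x ν) x) ∧
        ContinuousOn (fun p : ℝ × EuclideanSpace ℝ (Fin n) × ℝ => Ut p.1 p.2.1 p.2.2)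
          (Set.univ ×ˢ Metric.closedBall 0 r ×ˢ Set.Ioc 0 ν₀) ∧
        ContinuousOn (fun p : ℝ × EuclideanSpace ℝ (Fin n) × ℝ => Ux p.1 p.2.1 p.2.2)
          (Set.univ ×ˢ Metric.closedBall 0 r ×ˢ Set.Ioc 0 ν₀) ∧
        (∀ ν ∈ Set.Ioc (0:ℝ) ν₀,
          RAPUniform (fun t x => Ut t x ν) (Metric.closedBall 0 r) ∧
          RAPUniform (fun t x => Ux t x ν) (Metric.closedBall 0 r) ∧
          ∀ x ∈ Metric.closedBall (0 : EuclideanSpace ℝ (Fin n)) r,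
            ∃ m : EuclideanSpace ℝ (Fin n),
              Filter.Tendsto (fun T : ℝ => (1 / (2 * T)) • ∫ t in -T..T, Ut t x ν)
                Filter.atTop (nhds m)) ∧
        -- (3) G := ∂U/∂t − f(·,·,0) + f₀ has x-derivative Gx, and
        -- ν·U, ν·∂U/∂x, G, ∂G/∂x all tend to 0 as ν → 0⁺, uniformly
        (∀ ν ∈ Set.Ioc (0:ℝ) ν₀,
          ∀ x ∈ Metric.closedBall (0 : EuclideanSpace ℝ (Fin n)) r, ∀ t : ℝ,
          HasFDerivAt (fun y => Ut t y ν - f t y 0 + f₀ y) (Gx t x ν) x) ∧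
        (∀ ε > 0, ∃ ν₁ > 0, ∀ ν ∈ Set.Ioc (0:ℝ) ν₀, ν ≤ ν₁ → ∀ t : ℝ,
          ∀ x ∈ Metric.closedBall (0 : EuclideanSpace ℝ (Fin n)) r,
          ‖ν • U t x ν‖ ≤ ε ∧ ‖ν • Ux t x ν‖ ≤ ε ∧
          ‖Ut t x ν - f t x 0 + f₀ x‖ ≤ ε ∧ ‖Gx t x ν‖ ≤ ε) ∧
        -- (4) the change of variables x = y + ν U(t,y,ν) is invertible and
        -- transforms x' = ν f_ν(t,x) into y' = ν f₀(y) + ν F_ν(t,y)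
        (∀ ν ∈ Set.Ioc (0:ℝ) ν₀,
          (∀ t : ℝ, Set.InjOn (fun y => y + ν • U t y ν) (Metric.closedBall 0 r)) ∧
          RAPUniform (fun t x => F t x ν) (Metric.closedBall 0 r) ∧
          (∀ y : ℝ → EuclideanSpace ℝ (Fin n),
            (∀ t, y t ∈ Metric.closedBall (0 : EuclideanSpace ℝ (Fin n)) r) →
            ∀ t : ℝ,
              HasDerivAt (fun τ => y τ + ν • U τ (y τ) ν)
                (ν • f t (y t + ν • U t (y t) ν) ν) t ↔
              HasDerivAt y (ν • f₀ (y t) + ν • F t (y t) ν) t)) ∧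
        (∀ ε > 0, ∃ ν₂ > 0, ∀ ν ∈ Set.Ioc (0:ℝ) ν₀, ν ≤ ν₂ → ∀ t : ℝ,
          ∀ x ∈ Metric.closedBall (0 : EuclideanSpace ℝ (Fin n)) r,
          ‖F t x ν‖ ≤ ε) := fun _ _ hr =>
  averaging_change_of_variables_general hνbar hRAP (fun t => hdiff t 0 ⟨le_rfl, hνbar.le⟩)
    (fun ε hε => (hdcont ε hε).imp fun _ h => ⟨h.1, fun t => h.2 t 0 ⟨le_rfl, hνbar.le⟩⟩) havg hr
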